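/- arXiv:1906.11997 — 2 statements merged into one kernel-verified Lean document; each statement's English description precedes it below -/
import Mathlib

section
/- If ζ is a primitive root of unity of order 4k, then as q approaches ζ radially from within the unit disk, lim_{q→ζ} ( φ(q) − (q²,−q,−q;q²)_∞/((−q²,q;q²)_∞) ) = −2 Σ_{n=0}^{k−1} (1+ζ²)(1+ζ⁴)···(1+ζ^{2n}) ζ^{n+1}. -/
open scoped BigOperators
open Filter

/-- finite q-Pochhammer symbol (a;q)_n -/
noncomputable def qP (a q : ℂ) (n : ℕ) : ℂ := ∏ i ∈ Finset.range n, (1 - a * q ^ i)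

/-- q-Pochhammer symbol extended to integer index: (a;q)_{-n} = 1/(a q^{-n};q)_n -/
noncomputable def qPZ (a q : ℂ) : ℤ → ℂ
  | Int.ofNat n => qP a q n
  | Int.negSucc n => 1 / qP (a * q ^ (-(n + 1 : ℤ))) q (n + 1)

/-- infinite q-Pochhammer symbol (a;q)_∞ -/
noncomputable def qPInf (a q : ℂ) : ℂ := ∏' n : ℕ, (1 - a * q ^ n)

/-- Ramanujan's third order mock theta function φ -/
noncomputable def phi3 (q : ℂ) : ℂ := ∑' n : ℕ, q ^ (n ^ 2) / qP (-q ^ 2) (q ^ 2) n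

/-!
For `0 < |q| < 1` the difference `φ(q) - (q², -q, -q; q²)_∞ / (-q², q; q²)_∞` equals `-2 ψ(q)`,
where `ψ` is another third order mock theta function. To see this, evaluate
`∑ₙ zⁿ q^{n²} (b q^{2n}; q²)_∞` over `n ∈ ℤ` in two ways. Expanding the product by Euler's
identities gives a theta series times `1 / (-b/(zq); q²)_∞`; separating the signs of `n` gives two
one-sided series. Taking `b = q²` yields Jacobi's triple product, while `b = -q²` and `z = 1`
yields `φ` together with `∑ (-q²; q²)_n q^{n+1}`, which Fine's transformation turns into `ψ`.

Let `ζ` be a primitive root of unity of order `4k`. The factors `1 - ζ^{2j+1} z` over one period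
have product `1 + z^{2k}`, so along the radius each block of `2k` consecutive terms of `ψ` is
smaller than the preceding one by a uniform factor, and `ψ(q) → ψ(ζ)`. At `ζ`, Fine's series
terminates because `1 + ζ^{2k} = 0`.
-/

open Topology

/-! ### Summation tools -/

section Summation

lemma summable_norm_of_succ_eq_mul {R : Type*} [NormedRing R] {f g : ℕ → R} {l : R}
    (hl : ‖l‖ < 1) (hg : Tendsto g atTop (𝓝 l)) (h : ∀ n, f (n + 1) = g n * f n) :
    Summable fun n => ‖f n‖ := by
  obtain ⟨r, hlr, hr⟩ := exists_between hl
  refine summable_of_ratio_norm_eventually_le hr ?_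
  filter_upwards [hg.norm.eventually (eventually_le_nhds hlr)] with n hn
  rw [norm_norm, norm_norm, h]
  exact (norm_mul_le _ _).trans (by gcongr)

lemma summable_pow_div {r : ℝ} (hr0 : 0 ≤ r) (hr : r < 1) {M : ℕ} (hM : 0 < M) :
    Summable fun n : ℕ => r ^ (n / M) := by
  have : NeZero M := ⟨hM.ne'⟩
  have h : Summable fun x : ℕ × Fin M => r ^ x.1 * 1 :=
    (summable_geometric_of_lt_one hr0 hr).mul_of_nonneg
      (Summable.of_finite (f := fun _ : Fin M => (1 : ℝ))) (fun n => by positivity)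
      (fun _ => zero_le_one)
  refine ((Nat.divModEquiv M).summable_iff.mpr h).congr fun n => ?_
  simp [Nat.divModEquiv]

lemma le_mul_pow_div {u : ℕ → ℝ} {C r : ℝ} {M : ℕ} (hM : 0 < M) (hr : 0 ≤ r)
    (hC : ∀ n < M, u n ≤ C) (h : ∀ n, u (n + M) ≤ r * u n) (n : ℕ) :
    u n ≤ C * r ^ (n / M) := by
  induction n using Nat.strong_induction_on with
  | _ n ih =>
    rcases lt_or_ge n M with hn | hn
    · simpa [Nat.div_eq_of_lt hn] using hC n hn
    · obtain ⟨m, rfl⟩ := Nat.exists_eq_add_of_le' hn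
      calc u (m + M) ≤ r * u m := h m
        _ ≤ r * (C * r ^ (m / M)) := by gcongr; exact ih m (by omega)
        _ = C * r ^ ((m + M) / M) := by rw [Nat.add_div_right _ hM]; ring

section PeriodicRatioTest

variable {E : Type*} [NormedAddCommGroup E] [CompleteSpace E] {r : ℝ} {M : ℕ}

lemma summable_of_norm_add_le_mul {f : ℕ → E} (hM : 0 < M) (hr0 : 0 ≤ r) (hr : r < 1)
    (h : ∀ n, ‖f (n + M)‖ ≤ r * ‖f n‖) : Summable f := by
  have hC : ∀ n < M, ‖f n‖ ≤ ∑ i ∈ Finset.range M, ‖f i‖ := fun n hn =>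
    Finset.single_le_sum (f := fun i => ‖f i‖) (fun i _ => norm_nonneg _) (Finset.mem_range.mpr hn)
  exact .of_norm_bounded ((summable_pow_div hr0 hr hM).mul_left _) (le_mul_pow_div hM hr0 hC h)

theorem tendsto_tsum_of_norm_add_le_mul {α : Type*} {l : Filter α} {f : α → ℕ → E} {g : ℕ → E}
    (hM : 0 < M) (hr0 : 0 ≤ r) (hr : r < 1) (hfg : ∀ n, Tendsto (f · n) l (𝓝 (g n)))
    (hf : ∀ᶠ a in l, ∀ n, ‖f a (n + M)‖ ≤ r * ‖f a n‖) :
    Tendsto (fun a => ∑' n, f a n) l (𝓝 (∑' n, g n)) := by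
  set C : ℝ := 1 + ∑ i ∈ Finset.range M, ‖g i‖
  have hgC : ∀ n ∈ Finset.range M, ‖g n‖ < C := fun n hn => by
    have := Finset.single_le_sum (f := fun i => ‖g i‖) (fun i _ => norm_nonneg _) hn
    linarith
  have hfC : ∀ᶠ a in l, ∀ n ∈ Finset.range M, ‖f a n‖ < C :=
    (eventually_all_finset _).mpr fun n hn => (hfg n).norm.eventually_lt_const (hgC n hn)
  refine tendsto_tsum_of_dominated_convergence ((summable_pow_div hr0 hr hM).mul_left C) hfg ?_
  filter_upwards [hf, hfC] with a ha haC
  exact le_mul_pow_div hM hr0 (fun n hn => (haC n (Finset.mem_range.mpr hn)).le) ha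

end PeriodicRatioTest

section PowerSeries

variable {𝕜 : Type*} [NormedField 𝕜] {c : ℕ → 𝕜} {x : 𝕜}

lemma norm_mul_pow_le_norm_mul_pow {y : 𝕜} (h : ‖y‖ ≤ ‖x‖) (a : 𝕜) (m : ℕ) :
    ‖a * y ^ m‖ ≤ ‖a * x ^ m‖ := by
  simp only [norm_mul, norm_pow]
  gcongr

variable [CompleteSpace 𝕜]

lemma tendsto_tsum_mul_pow_of_tendsto_zero {ι : Type*} {l : Filter ι} {y : ι → 𝕜}
    (hc : Summable fun m => ‖c m * x ^ m‖) (hy : Tendsto y l (𝓝 0)) (hyx : ∀ i, ‖y i‖ ≤ ‖x‖) :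
    Tendsto (fun i => ∑' m, c m * y i ^ m) l (𝓝 (c 0)) := by
  have h0 : ∑' m, c m * (0 : 𝕜) ^ m = c 0 := by
    rw [tsum_eq_single 0 fun m hm => by simp [hm], pow_zero, mul_one]
  rw [← h0]
  exact tendsto_tsum_of_dominated_convergence hc (fun m => (hy.pow m).const_mul (c m))
    (.of_forall fun i m => norm_mul_pow_le_norm_mul_pow (hyx i) (c m) m)

-- A `q`-difference equation for the sum amounts to a first order recurrence for the coefficients.
lemma tsum_mul_pow_sub_tsum_mul_mul_pow {p : 𝕜} (hp : ‖p‖ ≤ 1)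
    (hc : Summable fun m => ‖c m * x ^ m‖) :
    ∑' m, c m * x ^ m - ∑' m, c m * (x * p) ^ m =
      x * ∑' m, c (m + 1) * (1 - p ^ (m + 1)) * x ^ m := by
  have hxp : ‖x * p‖ ≤ ‖x‖ := by
    rw [norm_mul]; exact mul_le_of_le_one_right (norm_nonneg _) hp
  have hcp : Summable fun m => c m * (x * p) ^ m :=
    .of_norm_bounded hc fun m => norm_mul_pow_le_norm_mul_pow hxp (c m) m
  rw [← hc.of_norm.tsum_sub hcp, (hc.of_norm.sub hcp).tsum_eq_zero_add, ← tsum_mul_left]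
  simp only [pow_zero, sub_self, zero_add]
  exact tsum_congr fun m => by ring

end PowerSeries

lemma hasSum_tsum_add_mul {G ι R : Type*} [AddGroup G] [NormedRing R] [CompleteSpace R]
    {f : G → R} {g : ι → R} (hf : Summable fun n => ‖f n‖) (hg : Summable fun i => ‖g i‖)
    (a : ι → G) :
    HasSum (fun n => ∑' i, f (n + a i) * g i) ((∑' n, f n) * ∑' i, g i) := by
  have hprod : HasSum (fun x : G × ι => f x.1 * g x.2) ((∑' n, f n) * ∑' i, g i) := by
    rw [tsum_mul_tsum_of_summable_norm hf hg]
    exact (hf.mul_norm hg).of_norm.hasSum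
  let shear : G × ι ≃ G × ι :=
    { toFun := fun x => (x.1 + a x.2, x.2)
      invFun := fun x => (x.1 - a x.2, x.2)
      left_inv := fun x => by simp
      right_inv := fun x => by simp }
  have hshear : HasSum (fun x : G × ι => f (x.1 + a x.2) * g x.2) _ := shear.hasSum_iff.mpr hprod
  exact hshear.prod_fiberwise fun n => (hshear.summable.prod_factor n).hasSum

end Summation

/-! ### q-Pochhammer symbols -/

section Pochhammer

variable {a p : ℂ}

lemma qP_zero (a q : ℂ) : qP a q 0 = 1 := Finset.prod_range_zero _

lemma qP_succ (a q : ℂ) (n : ℕ) : qP a q (n + 1) = qP a q n * (1 - a * q ^ n) :=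
  Finset.prod_range_succ _ _

lemma qP_add (a q : ℂ) (n m : ℕ) : qP a q (n + m) = qP a q n * qP (a * q ^ n) q m := by
  simp only [qP, Finset.prod_range_add, pow_add, mul_assoc]

lemma qP_succ' (a q : ℂ) (n : ℕ) : qP a q (n + 1) = (1 - a) * qP (a * q) q n := by
  rw [add_comm, qP_add, qP_succ, qP_zero, pow_zero, pow_one, one_mul, mul_one]

lemma qP_ne_zero (h : ∀ i : ℕ, 1 - a * p ^ i ≠ 0) (n : ℕ) : qP a p n ≠ 0 :=
  Finset.prod_ne_zero_iff.mpr fun i _ => h i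

lemma qP_eq_zero {i n : ℕ} (hin : i < n) (h : a * p ^ i = 1) : qP a p n = 0 :=
  Finset.prod_eq_zero (Finset.mem_range.mpr hin) (by rw [h, sub_self])

lemma qP_div_pow_mul_pow_choose (ha : a ≠ 0) (hp : p ≠ 0) (n : ℕ) :
    qP (a / p ^ n) p n * p ^ (n + 1).choose 2 = (-a) ^ n * qP (p / a) p n := by
  induction n with
  | zero => simp [qP_zero]
  | succ n ih =>
    have hshift : a / p ^ (n + 1) * p = a / p ^ n := by rw [pow_succ]; field_simp
    have hfactor : (1 - a / p ^ (n + 1)) * p ^ (n + 1) = -a * (1 - p / a * p ^ n) := by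
      field_simp
      ring
    rw [qP_succ', hshift, Nat.choose_succ_succ' (n + 1) 1, Nat.choose_one_right, qP_succ (p / a)]
    calc _ = (1 - a / p ^ (n + 1)) * p ^ (n + 1) *
          (qP (a / p ^ n) p n * p ^ (n + 1).choose 2) := by ring
      _ = _ := by rw [hfactor, ih]; ring

lemma norm_mul_pow_le (hp : ‖p‖ ≤ 1) (a : ℂ) (n : ℕ) : ‖a * p ^ n‖ ≤ ‖a‖ := by
  rw [norm_mul, norm_pow]
  exact mul_le_of_le_one_right (norm_nonneg _) (pow_le_one₀ (norm_nonneg _) hp)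

lemma one_sub_mul_pow_ne_zero (hp : ‖p‖ ≤ 1) (ha : ‖a‖ < 1) (n : ℕ) : 1 - a * p ^ n ≠ 0 :=
  (isUnit_one_sub_of_norm_lt_one ((norm_mul_pow_le hp a n).trans_lt ha)).ne_zero

lemma tendsto_mul_pow_zero (hp : ‖p‖ < 1) (a : ℂ) :
    Tendsto (fun n : ℕ => a * p ^ n) atTop (𝓝 0) := by
  simpa using (tendsto_pow_atTop_nhds_zero_of_norm_lt_one hp).const_mul a

lemma summable_norm_neg_mul_pow (hp : ‖p‖ < 1) (a : ℂ) :
    Summable fun n : ℕ => ‖-(a * p ^ n)‖ := by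
  simpa only [norm_neg, norm_mul, norm_pow] using
    (summable_geometric_of_lt_one (norm_nonneg _) hp).mul_left ‖a‖

lemma multipliable_one_sub_mul_pow (hp : ‖p‖ < 1) (a : ℂ) :
    Multipliable fun n : ℕ => 1 - a * p ^ n := by
  simpa only [sub_eq_add_neg] using
    multipliable_one_add_of_summable (summable_norm_neg_mul_pow hp a)

lemma qPInf_ne_zero (hp : ‖p‖ < 1) (h : ∀ n : ℕ, 1 - a * p ^ n ≠ 0) : qPInf a p ≠ 0 := by
  simp only [qPInf, sub_eq_add_neg] at h ⊢
  exact tprod_one_add_ne_zero_of_summable h (summable_norm_neg_mul_pow hp a)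

lemma tendsto_qP_atTop (hp : ‖p‖ < 1) (a : ℂ) : Tendsto (qP a p) atTop (𝓝 (qPInf a p)) :=
  (multipliable_one_sub_mul_pow hp a).tendsto_prod_tprod_nat

lemma qPInf_eq_qP_mul (hp : ‖p‖ < 1) (a : ℂ) (n : ℕ) :
    qPInf a p = qP a p n * qPInf (a * p ^ n) p := by
  have hshift : (fun i : ℕ => 1 - a * p ^ n * p ^ i) = fun i => 1 - a * p ^ (i + n) := by
    ext i; ring
  have hmul : Multipliable fun i : ℕ => 1 - a * p ^ (i + n) :=
    hshift ▸ multipliable_one_sub_mul_pow hp (a * p ^ n)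
  rw [qPInf, qPInf, hshift]
  exact (hmul.prod_mul_tprod_nat_mul' (f := fun i : ℕ => 1 - a * p ^ i)).symm

end Pochhammer

/-! ### Euler's identities -/

section Euler

variable {p x : ℂ}

lemma qPInf_mul_eq_of_tendsto (hp : ‖p‖ < 1) {F : ℂ → ℂ} {c : ℂ}
    (hF : ∀ n : ℕ, (1 - x * p ^ n) * F (x * p ^ n) = F (x * p ^ (n + 1)))
    (hc : Tendsto (fun n : ℕ => F (x * p ^ n)) atTop (𝓝 c)) : qPInf x p * F x = c := by
  have hiter : ∀ n : ℕ, qP x p n * F x = F (x * p ^ n) := fun n => by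
    induction n with
    | zero => simp [qP_zero]
    | succ n ih => rw [qP_succ, mul_right_comm, ih, mul_comm, hF]
  have hlim := (tendsto_qP_atTop hp x).mul_const (F x)
  simp only [hiter] at hlim
  exact tendsto_nhds_unique hlim hc

lemma eq_qPInf_mul_of_tendsto (hp : ‖p‖ < 1) {F : ℂ → ℂ} {c : ℂ}
    (hF : ∀ n : ℕ, F (x * p ^ n) = (1 - x * p ^ n) * F (x * p ^ (n + 1)))
    (hc : Tendsto (fun n : ℕ => F (x * p ^ n)) atTop (𝓝 c)) : F x = qPInf x p * c := by
  have hiter : ∀ n : ℕ, F x = qP x p n * F (x * p ^ n) := fun n => by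
    induction n with
    | zero => simp [qP_zero]
    | succ n ih => rw [ih, hF, qP_succ, mul_assoc]
  have hlim := (tendsto_qP_atTop hp x).mul hc
  simp only [← hiter] at hlim
  exact tendsto_nhds_unique tendsto_const_nhds hlim

lemma inv_qP_self_succ_mul (hp : ‖p‖ < 1) (m : ℕ) :
    (qP p p (m + 1))⁻¹ * (1 - p ^ (m + 1)) = (qP p p m)⁻¹ := by
  have hm := one_sub_mul_pow_ne_zero hp.le hp m
  rw [qP_succ, mul_inv, pow_succ' p, inv_mul_cancel_right₀ hm]

lemma summable_norm_inv_qP_self_mul_pow (hp : ‖p‖ < 1) (hx : ‖x‖ < 1) :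
    Summable fun m : ℕ => ‖(qP p p m)⁻¹ * x ^ m‖ := by
  have hratio : Tendsto (fun m : ℕ => x * (1 - p * p ^ m)⁻¹) atTop (𝓝 (x * (1 - 0)⁻¹)) :=
    (((tendsto_mul_pow_zero hp p).const_sub 1).inv₀ (by simp)).const_mul x
  refine summable_norm_of_succ_eq_mul (by simpa using hx) hratio fun m => ?_
  rw [qP_succ, mul_inv]
  ring

theorem qPInf_mul_tsum_inv_qP_self (hp : ‖p‖ < 1) (hx : ‖x‖ < 1) :
    qPInf x p * ∑' m : ℕ, (qP p p m)⁻¹ * x ^ m = 1 := by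
  have hxn : ∀ n : ℕ, ‖x * p ^ n‖ ≤ ‖x‖ := norm_mul_pow_le hp.le x
  refine qPInf_mul_eq_of_tendsto hp (F := fun y => ∑' m : ℕ, (qP p p m)⁻¹ * y ^ m) (fun n => ?_) ?_
  · have h := tsum_mul_pow_sub_tsum_mul_mul_pow hp.le
      (summable_norm_inv_qP_self_mul_pow hp ((hxn n).trans_lt hx))
    simp only [inv_qP_self_succ_mul hp, mul_assoc, ← pow_succ] at h
    linear_combination h
  · simpa [qP_zero] using tendsto_tsum_mul_pow_of_tendsto_zero
      (summable_norm_inv_qP_self_mul_pow hp hx) (tendsto_mul_pow_zero hp x) hxn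

lemma summable_norm_neg_one_pow_mul_pow_choose_two (hp : ‖p‖ < 1) (x : ℂ) :
    Summable fun m : ℕ => ‖(-1) ^ m * p ^ m.choose 2 * (qP p p m)⁻¹ * x ^ m‖ := by
  have hratio : Tendsto (fun m : ℕ => -x * p ^ m * (1 - p * p ^ m)⁻¹) atTop
      (𝓝 (0 * (1 - 0)⁻¹)) :=
    (tendsto_mul_pow_zero hp (-x)).mul
      (((tendsto_mul_pow_zero hp p).const_sub 1).inv₀ (by simp))
  refine summable_norm_of_succ_eq_mul (by simp) hratio fun m => ?_
  rw [qP_succ, mul_inv, Nat.choose_succ_succ' m 1, Nat.choose_one_right]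
  ring

theorem tsum_neg_one_pow_mul_pow_choose_two (hp : ‖p‖ < 1) (x : ℂ) :
    ∑' m : ℕ, (-1) ^ m * p ^ m.choose 2 * (qP p p m)⁻¹ * x ^ m = qPInf x p := by
  set c : ℕ → ℂ := fun m => (-1) ^ m * p ^ m.choose 2 * (qP p p m)⁻¹ with hc
  have hrec : ∀ (y : ℂ) (m : ℕ),
      c (m + 1) * (1 - p ^ (m + 1)) * y ^ m = -(c m * (y * p) ^ m) := fun y m => by
    simp only [hc]
    rw [mul_assoc _ _ (1 - _), inv_qP_self_succ_mul hp, Nat.choose_succ_succ' m 1,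
      Nat.choose_one_right]
    ring
  have h := eq_qPInf_mul_of_tendsto hp (x := x) (F := fun y => ∑' m : ℕ, c m * y ^ m) (fun n => ?_)
    (tendsto_tsum_mul_pow_of_tendsto_zero (summable_norm_neg_one_pow_mul_pow_choose_two hp x)
      (tendsto_mul_pow_zero hp x) (norm_mul_pow_le hp.le x))
  · simpa [hc, qP_zero] using h
  · have h := tsum_mul_pow_sub_tsum_mul_mul_pow (c := c) hp.le
      (summable_norm_neg_one_pow_mul_pow_choose_two hp (x * p ^ n))
    simp only [hrec, tsum_neg, mul_assoc x, ← pow_succ] at h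
    linear_combination h

end Euler

/-! ### Theta series and the Jacobi triple product -/

section Theta

lemma sq_pow_choose_two_mul_pow {M : Type*} [CommMonoid M] (q : M) (m : ℕ) :
    (q ^ 2) ^ m.choose 2 * q ^ m = q ^ m ^ 2 := by
  induction m with
  | zero => simp
  | succ m ih =>
    calc (q ^ 2) ^ (m + 1).choose 2 * q ^ (m + 1)
        = (q ^ 2) ^ m.choose 2 * q ^ m * q ^ (2 * m + 1) := by
          rw [Nat.choose_succ_succ' m 1, Nat.choose_one_right]
          simp only [← pow_mul, ← pow_add]
          congr 1
          ring
      _ = q ^ (m + 1) ^ 2 := by rw [ih, ← pow_add]; congr 1; ring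

lemma norm_sq_lt_one {q : ℂ} (hq : ‖q‖ < 1) : ‖q ^ 2‖ < 1 := by
  rw [norm_pow]
  exact pow_lt_one₀ (norm_nonneg _) hq two_ne_zero

variable {q z b : ℂ}

lemma summable_norm_pow_mul_pow_sq (hq : ‖q‖ < 1) (z : ℂ) :
    Summable fun n : ℕ => ‖z ^ n * q ^ n ^ 2‖ :=
  summable_norm_of_succ_eq_mul (by simp) (tendsto_mul_pow_zero (norm_sq_lt_one hq) (z * q))
    fun n => by ring

lemma summable_norm_zpow_mul_zpow_sq (hq : ‖q‖ < 1) (z : ℂ) :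
    Summable fun n : ℤ => ‖z ^ n * q ^ n ^ 2‖ := by
  refine .of_nat_of_neg ?_ ?_
  · exact_mod_cast summable_norm_pow_mul_pow_sq hq z
  · simp only [zpow_neg, ← inv_zpow, neg_sq]
    exact_mod_cast summable_norm_pow_mul_pow_sq hq z⁻¹

-- Expand the product by one of Euler's identities, shift the square, and sum the other one.
theorem hasSum_zpow_mul_zpow_sq_mul_qPInf (hq0 : q ≠ 0) (hq : ‖q‖ < 1) (hz : z ≠ 0)
    (hb : ‖b / (z * q)‖ < 1) :
    HasSum (fun n : ℤ => z ^ n * q ^ n ^ 2 * qPInf (b * (q ^ 2) ^ n) (q ^ 2))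
      ((∑' n : ℤ, z ^ n * q ^ n ^ 2) * (qPInf (-(b / (z * q))) (q ^ 2))⁻¹) := by
  have hp := norm_sq_lt_one hq
  set y : ℂ := -(b / (z * q)) with hy
  have hy1 : ‖y‖ < 1 := by rwa [hy, norm_neg]
  have hexpand : ∀ n : ℤ, z ^ n * q ^ n ^ 2 * qPInf (b * (q ^ 2) ^ n) (q ^ 2) =
      ∑' m : ℕ, z ^ (n + m) * q ^ (n + m) ^ 2 * ((qP (q ^ 2) (q ^ 2) m)⁻¹ * y ^ m) := fun n => by
    rw [← tsum_neg_one_pow_mul_pow_choose_two hp, ← tsum_mul_left]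
    refine tsum_congr fun m => ?_
    have hsquare : q ^ (n + m) ^ 2 =
        q ^ n ^ 2 * ((q ^ 2) ^ n) ^ m * ((q ^ 2) ^ m.choose 2 * q ^ m) := by
      rw [sq_pow_choose_two_mul_pow]
      simp only [← zpow_natCast, ← zpow_mul, ← zpow_add₀ hq0]
      congr 1
      push_cast
      ring
    have hym : z ^ m * q ^ m * y ^ m = (-1) ^ m * b ^ m := by
      rw [← mul_pow, ← mul_pow, ← mul_pow, hy]
      congr 1
      field_simp
    rw [hsquare, zpow_add₀ hz, zpow_natCast, mul_pow b]
    linear_combination -(z ^ n * q ^ n ^ 2 * ((q ^ 2) ^ n) ^ m * (q ^ 2) ^ m.choose 2 *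
      (qP (q ^ 2) (q ^ 2) m)⁻¹) * hym
  have hsum := hasSum_tsum_add_mul (summable_norm_zpow_mul_zpow_sq hq z)
    (summable_norm_inv_qP_self_mul_pow hp hy1) (fun m : ℕ => (m : ℤ))
  simpa only [hexpand, eq_inv_of_mul_eq_one_right (qPInf_mul_tsum_inv_qP_self hp hy1)] using hsum

lemma pow_sq_mul_qPInf_mul_pow (hq : ‖q‖ < 1) (hbq : ∀ n : ℕ, 1 - b * (q ^ 2) ^ n ≠ 0)
    (n : ℕ) :
    q ^ n ^ 2 * qPInf (b * (q ^ 2) ^ n) (q ^ 2) =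
      qPInf b (q ^ 2) * (q ^ n ^ 2 / qP b (q ^ 2) n) := by
  have hP := qP_ne_zero hbq n
  rw [qPInf_eq_qP_mul (norm_sq_lt_one hq) b n]
  field_simp

lemma pow_sq_mul_qPInf_div_pow (hq0 : q ≠ 0) (hq : ‖q‖ < 1) (hb : b ≠ 0) (n : ℕ) :
    q ^ n ^ 2 * qPInf (b / (q ^ 2) ^ n) (q ^ 2) =
      qPInf b (q ^ 2) * (qP (q ^ 2 / b) (q ^ 2) n * (-(b / q)) ^ n) := by
  have hreflect := qP_div_pow_mul_pow_choose hb (pow_ne_zero 2 hq0) n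
  rw [Nat.choose_succ_succ' n 1, Nat.choose_one_right, pow_add, mul_comm ((q ^ 2) ^ n),
    ← mul_assoc] at hreflect
  rw [qPInf_eq_qP_mul (norm_sq_lt_one hq) _ n, div_mul_cancel₀ _ (by simp [hq0]),
    ← sq_pow_choose_two_mul_pow, neg_div', div_pow]
  field_simp
  linear_combination qPInf b (q ^ 2) * hreflect

-- Ramanujan's `₁ψ₁` summation in the limit `a → ∞`, the bilateral series being split by the
-- sign of the index.
theorem qPInf_mul_qPInf_mul_tsum_add_tsum (hq0 : q ≠ 0) (hq : ‖q‖ < 1) (hz : z ≠ 0) (hb0 : b ≠ 0)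
    (hb : ‖b / (z * q)‖ < 1) (hbq : ∀ n : ℕ, 1 - b * (q ^ 2) ^ n ≠ 0) :
    qPInf b (q ^ 2) * qPInf (-(b / (z * q))) (q ^ 2) *
        (∑' n : ℕ, z ^ n * q ^ n ^ 2 / qP b (q ^ 2) n +
          ∑' n : ℕ, qP (q ^ 2 / b) (q ^ 2) (n + 1) * (-(b / (z * q))) ^ (n + 1)) =
      ∑' n : ℤ, z ^ n * q ^ n ^ 2 := by
  have hp := norm_sq_lt_one hq
  have hsum := hasSum_zpow_mul_zpow_sq_mul_qPInf hq0 hq hz hb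
  set f : ℤ → ℂ := fun n => z ^ n * q ^ n ^ 2 * qPInf (b * (q ^ 2) ^ n) (q ^ 2) with hf
  have hnonneg : ∀ n : ℕ, f n = qPInf b (q ^ 2) * (z ^ n * q ^ n ^ 2 / qP b (q ^ 2) n) := by
    intro n
    have hterm := pow_sq_mul_qPInf_mul_pow hq hbq n
    have hfn : f n = z ^ n * q ^ n ^ 2 * qPInf (b * (q ^ 2) ^ n) (q ^ 2) := mod_cast rfl
    linear_combination hfn + z ^ n * hterm
  have hneg : ∀ n : ℕ, f (-(n + 1)) =
      qPInf b (q ^ 2) * (qP (q ^ 2 / b) (q ^ 2) (n + 1) * (-(b / (z * q))) ^ (n + 1)) := by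
    intro n
    have hterm := pow_sq_mul_qPInf_div_pow hq0 hq hb0 (n + 1)
    have hfn : f (-(n + 1)) =
        z⁻¹ ^ (n + 1) * (q ^ (n + 1) ^ 2 * qPInf (b / (q ^ 2) ^ (n + 1)) (q ^ 2)) := by
      simp only [hf, zpow_neg, neg_sq, inv_pow, div_eq_mul_inv]
      norm_cast
      ring
    have hpow : (-(b / (z * q))) ^ (n + 1) = z⁻¹ ^ (n + 1) * (-(b / q)) ^ (n + 1) := by
      rw [← mul_pow]
      congr 1
      field_simp
    rw [hfn, hterm, hpow]
    ring
  have hsplit : ∑' n, f n = ∑' n : ℕ, f n + ∑' n : ℕ, f (-(n + 1)) :=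
    tsum_of_nat_of_neg_add_one (hsum.summable.comp_injective Nat.cast_injective)
      (hsum.summable.comp_injective (i := fun n : ℕ => -((n : ℤ) + 1)) fun a b hab => by
        simpa using hab)
  rw [hsum.tsum_eq] at hsplit
  simp only [hnonneg, hneg, tsum_mul_left, ← mul_add] at hsplit
  have hne : qPInf (-(b / (z * q))) (q ^ 2) ≠ 0 :=
    qPInf_ne_zero hp (one_sub_mul_pow_ne_zero hp.le (by rwa [norm_neg]))
  rw [mul_right_comm, ← hsplit, inv_mul_cancel_right₀ hne]

lemma tsum_pow_mul_pow_sq_div_qP_self (hq : ‖q‖ < 1) (z : ℂ) :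
    ∑' n : ℕ, z ^ n * q ^ n ^ 2 / qP (q ^ 2) (q ^ 2) n = qPInf (-(z * q)) (q ^ 2) := by
  rw [← tsum_neg_one_pow_mul_pow_choose_two (norm_sq_lt_one hq)]
  refine tsum_congr fun n => ?_
  have hsign : (-1 : ℂ) ^ n * (-1) ^ n = 1 := by rw [← mul_pow]; simp
  rw [neg_pow (z * q), ← sq_pow_choose_two_mul_pow, mul_pow, div_eq_mul_inv]
  linear_combination -((q ^ 2) ^ n.choose 2 * (qP (q ^ 2) (q ^ 2) n)⁻¹ * z ^ n * q ^ n) * hsign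

lemma tsum_zpow_mul_zpow_sq_of_norm_lt (hq0 : q ≠ 0) (hq : ‖q‖ < 1) (hqz : ‖q‖ < ‖z‖) :
    ∑' n : ℤ, z ^ n * q ^ n ^ 2 =
      qPInf (q ^ 2) (q ^ 2) * qPInf (-(z * q)) (q ^ 2) * qPInf (-(z⁻¹ * q)) (q ^ 2) := by
  have hp := norm_sq_lt_one hq
  have hz : z ≠ 0 := norm_pos_iff.mp ((norm_nonneg q).trans_lt hqz)
  have hdiv : q ^ 2 / (z * q) = z⁻¹ * q := by field_simp
  have hnorm : ‖q ^ 2 / (z * q)‖ < 1 := by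
    rwa [hdiv, inv_mul_eq_div, norm_div, div_lt_one ((norm_nonneg q).trans_lt hqz)]
  have hvanish : ∀ n : ℕ, qP (q ^ 2 / q ^ 2) (q ^ 2) (n + 1) = 0 := fun n =>
    qP_eq_zero n.succ_pos (by field_simp)
  have h := qPInf_mul_qPInf_mul_tsum_add_tsum hq0 hq hz (pow_ne_zero 2 hq0) hnorm
    (one_sub_mul_pow_ne_zero hp.le hp)
  simp only [hvanish, zero_mul, tsum_zero, add_zero, tsum_pow_mul_pow_sq_div_qP_self hq, hdiv] at h
  rw [← h]
  ring

theorem jacobi_triple_product (hq0 : q ≠ 0) (hq : ‖q‖ < 1) (hz : z ≠ 0) :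
    ∑' n : ℤ, z ^ n * q ^ n ^ 2 =
      qPInf (q ^ 2) (q ^ 2) * qPInf (-(z * q)) (q ^ 2) * qPInf (-(z⁻¹ * q)) (q ^ 2) := by
  rcases lt_or_ge ‖q‖ ‖z‖ with hqz | hzq
  · exact tsum_zpow_mul_zpow_sq_of_norm_lt hq0 hq hqz
  · have hqz : ‖q‖ < ‖z⁻¹‖ := by
      rw [norm_inv]
      exact hq.trans (one_lt_inv_iff₀.mpr ⟨norm_pos_iff.mpr hz, hzq.trans_lt hq⟩)
    have hsymm : ∑' n : ℤ, z ^ n * q ^ n ^ 2 = ∑' n : ℤ, z⁻¹ ^ n * q ^ n ^ 2 := by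
      rw [← (Equiv.neg ℤ).tsum_eq]
      simp
    rw [hsymm, tsum_zpow_mul_zpow_sq_of_norm_lt hq0 hq hqz, inv_inv, mul_right_comm]

end Theta

/-! ### Fine's transformation -/

section Fine

variable {c p x : ℂ}

lemma summable_norm_qP_mul_pow (hp : ‖p‖ < 1) (hx : ‖x‖ < 1) (c : ℂ) :
    Summable fun m : ℕ => ‖qP c p m * x ^ m‖ := by
  have hratio : Tendsto (fun m : ℕ => x * (1 - c * p ^ m)) atTop (𝓝 (x * (1 - 0))) :=
    ((tendsto_mul_pow_zero hp c).const_sub 1).const_mul x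
  refine summable_norm_of_succ_eq_mul (by simpa using hx) hratio fun m => ?_
  rw [qP_succ]
  ring

lemma one_sub_mul_tsum_qP_mul_pow (hx : Summable fun m : ℕ => qP c p m * x ^ m)
    (hxp : Summable fun m : ℕ => qP c p m * (x * p) ^ m) :
    (1 - x) * ∑' m : ℕ, qP c p m * x ^ m =
      1 - c * x * ∑' m : ℕ, qP c p m * (x * p) ^ m := by
  have h : ∑' m : ℕ, qP c p m * x ^ m = 1 + (x * ∑' m : ℕ, qP c p m * x ^ m -
      c * x * ∑' m : ℕ, qP c p m * (x * p) ^ m) := by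
    conv_lhs => rw [hx.tsum_eq_zero_add, qP_zero, pow_zero, mul_one]
    rw [← tsum_mul_left, ← tsum_mul_left, ← (hx.mul_left x).tsum_sub (hxp.mul_left (c * x))]
    congr 1
    refine tsum_congr fun m => ?_
    rw [qP_succ]
    ring
  linear_combination h

variable (hp : ‖p‖ ≤ 1) (h0 : ∀ n : ℕ, 1 - x * p ^ n ≠ 0)
  (hs : Summable fun m : ℕ => ‖qP c p m * x ^ m‖)

include hp h0 hs

lemma tsum_qP_mul_pow_eq_sum_add (N : ℕ) :
    ∑' m : ℕ, qP c p m * x ^ m =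
      ∑ n ∈ Finset.range N, (-(c * x)) ^ n * p ^ n.choose 2 / qP x p (n + 1) +
        (-(c * x)) ^ N * p ^ N.choose 2 / qP x p N * ∑' m : ℕ, qP c p m * (x * p ^ N) ^ m := by
  have hsum : ∀ n : ℕ, Summable fun m : ℕ => qP c p m * (x * p ^ n) ^ m := fun n =>
    .of_norm_bounded hs fun m => norm_mul_pow_le_norm_mul_pow (norm_mul_pow_le hp x n) _ m
  induction N with
  | zero => simp [qP_zero]
  | succ N ih =>
    have hrec := one_sub_mul_tsum_qP_mul_pow (hsum N)
      (by simpa only [mul_assoc, ← pow_succ] using hsum (N + 1))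
    rw [mul_assoc x, ← pow_succ] at hrec
    have hN := h0 N
    have hP := qP_ne_zero h0 N
    rw [ih, Finset.sum_range_succ, add_assoc, eq_div_of_mul_eq hN ((mul_comm _ _).trans hrec),
      qP_succ, Nat.choose_succ_succ' N 1, Nat.choose_one_right]
    congr 1
    field_simp
    ring

theorem tsum_qP_mul_pow_eq_tsum
    (hd : Summable fun n : ℕ => (-(c * x)) ^ n * p ^ n.choose 2 / qP x p (n + 1)) :
    ∑' m : ℕ, qP c p m * x ^ m =
      ∑' n : ℕ, (-(c * x)) ^ n * p ^ n.choose 2 / qP x p (n + 1) := by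
  set d : ℕ → ℂ := fun n => (-(c * x)) ^ n * p ^ n.choose 2 / qP x p (n + 1) with hd_def
  set B : ℝ := ∑' m : ℕ, ‖qP c p m * x ^ m‖
  have hB : ∀ N : ℕ, ‖∑' m : ℕ, qP c p m * (x * p ^ N) ^ m‖ ≤ B := fun N =>
    tsum_of_norm_bounded hs.hasSum fun m =>
      norm_mul_pow_le_norm_mul_pow (norm_mul_pow_le hp x N) _ m
  have hremainder : Tendsto (fun N : ℕ => (-(c * x)) ^ N * p ^ N.choose 2 / qP x p N *
      ∑' m : ℕ, qP c p m * (x * p ^ N) ^ m) atTop (𝓝 0) := by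
    have hbound : Tendsto (fun N => ‖d N‖ * (1 + ‖x‖) * B) atTop (𝓝 0) := by
      simpa using (hd.tendsto_atTop_zero.norm.mul_const (1 + ‖x‖)).mul_const B
    refine squeeze_zero_norm (fun N => ?_) hbound
    have hcoeff : (-(c * x)) ^ N * p ^ N.choose 2 / qP x p N = d N * (1 - x * p ^ N) := by
      have hN := h0 N
      have hP := qP_ne_zero h0 N
      simp only [hd_def, qP_succ]
      field_simp
    have hfactor : ‖1 - x * p ^ N‖ ≤ 1 + ‖x‖ :=
      (norm_sub_le _ _).trans (by rw [norm_one]; gcongr; exact norm_mul_pow_le hp x N)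
    rw [hcoeff, norm_mul, norm_mul]
    gcongr
    exact hB N
  have hlim := hd.hasSum.tendsto_sum_nat.add hremainder
  simp only [hd_def, ← tsum_qP_mul_pow_eq_sum_add hp h0 hs, add_zero] at hlim
  exact tendsto_nhds_unique tendsto_const_nhds hlim

end Fine

/-! ### The mock theta functions `φ` and `ψ` -/

/-- Ramanujan's third order mock theta function `ψ(q) = ∑_{n ≥ 1} q^{n²} / (q; q²)_n`, with the
summation index shifted so as to start at `0`. Its series, unlike that of `φ`, still converges
at the primitive roots of unity of order divisible by `4`. -/
noncomputable def psi3 (q : ℂ) : ℂ := ∑' n : ℕ, q ^ (n + 1) ^ 2 / qP q (q ^ 2) (n + 1)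

section MockTheta

variable {q : ℂ}

lemma summable_psi3 (hq : ‖q‖ < 1) :
    Summable fun n : ℕ => q ^ (n + 1) ^ 2 / qP q (q ^ 2) (n + 1) := by
  have hpow := tendsto_mul_pow_zero (norm_sq_lt_one hq) (q ^ 3)
  have hratio : Tendsto (fun n : ℕ => q ^ 3 * (q ^ 2) ^ n * (1 - q ^ 3 * (q ^ 2) ^ n)⁻¹) atTop
      (𝓝 (0 * (1 - 0)⁻¹)) := hpow.mul ((hpow.const_sub 1).inv₀ (by simp))
  refine (summable_norm_of_succ_eq_mul (by simp) hratio fun n => ?_).of_norm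
  rw [qP_succ _ _ (n + 1), div_eq_mul_inv, div_eq_mul_inv, mul_inv]
  ring

theorem tsum_qP_mul_pow_eq_psi3 (hq0 : q ≠ 0) (hq : ‖q‖ ≤ 1)
    (h0 : ∀ n : ℕ, 1 - q * (q ^ 2) ^ n ≠ 0)
    (hs : Summable fun n : ℕ => ‖qP (-q ^ 2) (q ^ 2) n * q ^ n‖)
    (hd : Summable fun n : ℕ => q ^ (n + 1) ^ 2 / qP q (q ^ 2) (n + 1)) :
    ∑' n : ℕ, qP (-q ^ 2) (q ^ 2) n * q ^ (n + 1) = psi3 q := by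
  have hp : ‖q ^ 2‖ ≤ 1 := by rw [norm_pow]; exact pow_le_one₀ (norm_nonneg _) hq
  have hterm : ∀ n : ℕ, q ^ (n + 1) ^ 2 / qP q (q ^ 2) (n + 1) =
      q * ((-(-q ^ 2 * q)) ^ n * (q ^ 2) ^ n.choose 2 / qP q (q ^ 2) (n + 1)) := fun n => by
    rw [← mul_div_assoc, ← sq_pow_choose_two_mul_pow, Nat.choose_succ_succ' n 1,
      Nat.choose_one_right]
    ring
  simp only [hterm, summable_mul_left_iff hq0] at hd
  simp only [psi3, hterm, tsum_mul_left, ← tsum_qP_mul_pow_eq_tsum hp h0 hs hd]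
  rw [← tsum_mul_left]
  exact tsum_congr fun n => by ring

theorem phi3_sub_eq_neg_two_mul_tsum_qP (hq0 : q ≠ 0) (hq : ‖q‖ < 1) :
    phi3 q - qPInf (q ^ 2) (q ^ 2) * qPInf (-q) (q ^ 2) * qPInf (-q) (q ^ 2) /
        (qPInf (-q ^ 2) (q ^ 2) * qPInf q (q ^ 2)) =
      -2 * ∑' n : ℕ, qP (-q ^ 2) (q ^ 2) n * q ^ (n + 1) := by
  have hp := norm_sq_lt_one hq
  have hdiv : -q ^ 2 / (1 * q) = -q := by field_simp
  have hdiv' : q ^ 2 / -q ^ 2 = -1 := by field_simp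
  have hb := one_sub_mul_pow_ne_zero hp.le (a := -q ^ 2) (by rwa [norm_neg])
  have hP : qPInf (-q ^ 2) (q ^ 2) ≠ 0 := qPInf_ne_zero hp hb
  have hQ : qPInf q (q ^ 2) ≠ 0 := qPInf_ne_zero hp (one_sub_mul_pow_ne_zero hp.le hq)
  have hneg : ∀ n : ℕ, qP (-1) (q ^ 2) (n + 1) = 2 * qP (-q ^ 2) (q ^ 2) n := fun n => by
    rw [qP_succ', neg_one_mul, sub_neg_eq_add, one_add_one_eq_two]
  have h := qPInf_mul_qPInf_mul_tsum_add_tsum hq0 hq one_ne_zero (b := -q ^ 2)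
    (neg_ne_zero.mpr (pow_ne_zero 2 hq0)) (by rwa [hdiv, norm_neg]) hb
  rw [jacobi_triple_product hq0 hq one_ne_zero] at h
  simp only [one_pow, one_mul, inv_one, hdiv', hneg, mul_assoc (2 : ℂ), tsum_mul_left] at h
  rw [one_mul] at hdiv
  rw [hdiv, neg_neg, ← phi3] at h
  rw [← h]
  field_simp
  ring

theorem phi3_sub_eq_neg_two_mul_psi3 (hq0 : q ≠ 0) (hq : ‖q‖ < 1) :
    phi3 q - qPInf (q ^ 2) (q ^ 2) * qPInf (-q) (q ^ 2) * qPInf (-q) (q ^ 2) /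
        (qPInf (-q ^ 2) (q ^ 2) * qPInf q (q ^ 2)) = -2 * psi3 q := by
  have hp := norm_sq_lt_one hq
  rw [phi3_sub_eq_neg_two_mul_tsum_qP hq0 hq, tsum_qP_mul_pow_eq_psi3 hq0 hq.le
    (one_sub_mul_pow_ne_zero hp.le hq) (summable_norm_qP_mul_pow hp hq _) (summable_psi3 hq)]

end MockTheta

/-! ### Radial limits at roots of unity -/

lemma qP_eq_one_sub_pow {m : ℕ} {ω : ℂ} (hm : 0 < m) (hω : IsPrimitiveRoot ω m) (a : ℂ) :
    qP a ω m = 1 - a ^ m := by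
  have h := congrArg (Polynomial.eval 1) (X_pow_sub_C_eq_prod hω hm (α := a) rfl)
  simp only [Polynomial.eval_sub, Polynomial.eval_pow, Polynomial.eval_X, Polynomial.eval_C,
    Polynomial.eval_prod, one_pow] at h
  rw [h]
  exact Finset.prod_congr rfl fun j _ => by rw [mul_comm]

lemma pow_sq_div_qP_add (q : ℂ) (n m : ℕ) :
    q ^ (n + m) ^ 2 / qP q (q ^ 2) (n + m) =
      q ^ n ^ 2 / qP q (q ^ 2) n *
        (q ^ m ^ 2 * (q ^ (2 * n)) ^ m / qP (q ^ (2 * n) * q) (q ^ 2) m) := by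
  rw [qP_add, div_mul_div_comm, ← pow_mul q 2 n, mul_comm q (q ^ (2 * n))]
  ring

lemma norm_pow_sq_div_qP_add_le {q : ℂ} {r : ℝ} {n m : ℕ} (hq : ‖q‖ ≤ 1) (hr : 0 ≤ r)
    (h : ‖q ^ (2 * n)‖ ^ m ≤ r * ‖qP (q ^ (2 * n) * q) (q ^ 2) m‖) :
    ‖q ^ (n + m) ^ 2 / qP q (q ^ 2) (n + m)‖ ≤ r * ‖q ^ n ^ 2 / qP q (q ^ 2) n‖ := by
  rw [pow_sq_div_qP_add, norm_mul, mul_comm]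
  gcongr
  rw [norm_div, norm_mul, norm_pow q, norm_pow _ m]
  refine div_le_of_le_mul₀ (norm_nonneg _) hr (le_trans ?_ h)
  exact mul_le_of_le_one_left (by positivity) (pow_le_one₀ (norm_nonneg _) hq)

lemma tendsto_pow_sq_div_qP {q : ℂ} (h0 : ∀ n : ℕ, 1 - q * (q ^ 2) ^ n ≠ 0) (n : ℕ) :
    Tendsto (fun x : ℂ => x ^ n ^ 2 / qP x (x ^ 2) n) (𝓝 q) (𝓝 (q ^ n ^ 2 / qP q (q ^ 2) n)) := by
  refine ContinuousAt.div (by fun_prop) ?_ (qP_ne_zero h0 n)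
  unfold qP
  fun_prop

lemma tendsto_ofReal_mul (s : Set ℝ) (ζ : ℂ) :
    Tendsto (fun t : ℝ => (t * ζ : ℂ)) (𝓝[s] 1) (𝓝 ζ) :=
  tendsto_nhdsWithin_of_tendsto_nhds (Continuous.tendsto' (by fun_prop) _ _ (by simp))

lemma norm_ofReal_mul_of_norm_eq_one {t : ℝ} {ζ : ℂ} (hζ : ‖ζ‖ = 1) (ht : 0 ≤ t) :
    ‖(t * ζ : ℂ)‖ = t := by
  rw [norm_mul, hζ, mul_one, Complex.norm_of_nonneg ht]

section EvenOrder

variable {m : ℕ} {ζ : ℂ} (hζ : IsPrimitiveRoot ζ (2 * m))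

include hζ

lemma one_sub_mul_sq_pow_ne_zero (n : ℕ) : 1 - ζ * (ζ ^ 2) ^ n ≠ 0 := by
  intro h
  have hpow : ζ ^ (2 * n + 1) = 1 := by linear_combination -h
  have hdvd : 2 * m ∣ 2 * n + 1 := hζ.dvd_of_pow_eq_one _ hpow
  have := (dvd_mul_right 2 m).trans hdvd
  omega

variable (hm : 0 < m)

include hm

lemma pow_eq_neg_one_of_isPrimitiveRoot_two_mul : ζ ^ m = -1 :=
  (hζ.pow (by omega) (mul_comm 2 m)).eq_neg_one_of_two_right

lemma qP_mul_self_sq (z : ℂ) : qP (z * ζ) (ζ ^ 2) m = 1 + z ^ m := by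
  rw [qP_eq_one_sub_pow hm (hζ.pow (by omega) rfl), mul_pow,
    pow_eq_neg_one_of_isPrimitiveRoot_two_mul hζ hm]
  ring

-- At `q = ζ` the product is `1 + z ^ m = 1 + ‖z‖ ^ m`, and compactness of the set of admissible `z`
-- extends the bound to a neighbourhood of `ζ`.
lemma eventually_norm_pow_lt_norm_qP :
    ∀ᶠ q in 𝓝 ζ, ∀ z : ℂ, ‖z‖ ≤ 1 → z ^ m = (‖z‖ : ℂ) ^ m →
      ‖z‖ ^ m < 3 / 4 * ‖qP (z * q) (q ^ 2) m‖ := by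
  have hK : IsCompact (Metric.closedBall 0 1 ∩ {z : ℂ | z ^ m = (‖z‖ : ℂ) ^ m}) :=
    (isCompact_closedBall 0 1).inter_right (isClosed_eq (by fun_prop) (by fun_prop))
  refine (hK.eventually_forall_of_forall_eventually (x₀ := ζ)
    (P := fun q z => ‖z‖ ^ m < 3 / 4 * ‖qP (z * q) (q ^ 2) m‖) fun z hz => ?_).mono
    fun q hq z hz hzm => hq z ⟨mem_closedBall_zero_iff.mpr hz, hzm⟩
  have hz1 : ‖z‖ ^ m ≤ 1 := pow_le_one₀ (norm_nonneg _) (mem_closedBall_zero_iff.mp hz.1)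
  have hnorm : ‖qP (z * ζ) (ζ ^ 2) m‖ = 1 + ‖z‖ ^ m := by
    rw [qP_mul_self_sq hζ hm, show z ^ m = _ from hz.2, ← Complex.ofReal_pow, ← Complex.ofReal_one,
      ← Complex.ofReal_add, Complex.norm_real, Real.norm_of_nonneg (by positivity)]
  refine ContinuousAt.eventually_lt (by fun_prop) (by unfold qP; fun_prop) ?_
  rw [hnorm]
  linarith

lemma eventually_norm_pow_sq_div_qP_add_le :
    ∀ᶠ t : ℝ in 𝓝[Set.Icc 0 1] 1, ∀ n : ℕ,
      ‖(t * ζ : ℂ) ^ (n + m) ^ 2 / qP (t * ζ) ((t * ζ) ^ 2) (n + m)‖ ≤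
        3 / 4 * ‖(t * ζ : ℂ) ^ n ^ 2 / qP (t * ζ) ((t * ζ) ^ 2) n‖ := by
  filter_upwards [(tendsto_ofReal_mul _ ζ).eventually (eventually_norm_pow_lt_norm_qP hζ hm),
    self_mem_nhdsWithin] with t hblock ⟨ht0, ht1⟩ n
  have hnorm : ‖(t * ζ : ℂ)‖ = t := norm_ofReal_mul_of_norm_eq_one (hζ.norm'_eq_one (by omega)) ht0
  have hq : ‖(t * ζ : ℂ)‖ ≤ 1 := hnorm.trans_le ht1
  have hperiod : (ζ ^ (2 * n)) ^ m = 1 := by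
    rw [← pow_mul, mul_right_comm, pow_mul, hζ.pow_eq_one, one_pow]
  refine norm_pow_sq_div_qP_add_le hq (by norm_num) (hblock _ ?_ ?_).le
  · rw [norm_pow]
    exact pow_le_one₀ (norm_nonneg _) hq
  · rw [norm_pow, hnorm, mul_pow, mul_pow, hperiod, mul_one, Complex.ofReal_pow]

lemma summable_psi3_of_isPrimitiveRoot :
    Summable fun n : ℕ => ζ ^ (n + 1) ^ 2 / qP ζ (ζ ^ 2) (n + 1) := by
  have h := (eventually_norm_pow_sq_div_qP_add_le hζ hm).self_of_nhdsWithin (by simp)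
  simp only [Complex.ofReal_one, one_mul] at h
  have hs : Summable fun n : ℕ => ζ ^ n ^ 2 / qP ζ (ζ ^ 2) n :=
    summable_of_norm_add_le_mul (r := 3 / 4) hm (by norm_num) (by norm_num) h
  exact hs.comp_injective (add_left_injective 1)

theorem tendsto_psi3 :
    Tendsto (fun t : ℝ => psi3 (t * ζ)) (𝓝[Set.Icc 0 1] 1) (𝓝 (psi3 ζ)) := by
  refine tendsto_tsum_of_norm_add_le_mul (r := 3 / 4) hm (by norm_num) (by norm_num)
    (fun n => (tendsto_pow_sq_div_qP (one_sub_mul_sq_pow_ne_zero hζ) (n + 1)).comp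
      (tendsto_ofReal_mul _ ζ)) ?_
  filter_upwards [eventually_norm_pow_sq_div_qP_add_le hζ hm] with t ht n
  rw [add_right_comm]
  exact ht (n + 1)

theorem tendsto_phi3_sub :
    Tendsto (fun t : ℝ => phi3 (t * ζ) -
        qPInf ((t * ζ) ^ 2) ((t * ζ) ^ 2) * qPInf (-(t * ζ)) ((t * ζ) ^ 2) *
          qPInf (-(t * ζ)) ((t * ζ) ^ 2) /
        (qPInf (-(t * ζ) ^ 2) ((t * ζ) ^ 2) * qPInf (t * ζ) ((t * ζ) ^ 2)))
      (𝓝[Set.Ioo 0 1] 1) (𝓝 (-2 * psi3 ζ)) := by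
  refine (((tendsto_psi3 hζ hm).mono_left
    (nhdsWithin_mono 1 Set.Ioo_subset_Icc_self)).const_mul (-2)).congr' ?_
  filter_upwards [self_mem_nhdsWithin] with t ⟨ht0, ht1⟩
  have hnorm : ‖(t * ζ : ℂ)‖ = t :=
    norm_ofReal_mul_of_norm_eq_one (hζ.norm'_eq_one (by omega)) ht0.le
  have hq0 : (t * ζ : ℂ) ≠ 0 := norm_pos_iff.mp (ht0.trans_eq hnorm.symm)
  exact (phi3_sub_eq_neg_two_mul_psi3 hq0 (hnorm.trans_lt ht1)).symm

end EvenOrder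

-- The left-hand side of Fine's transformation terminates because `1 + ζ ^ (2 * k) = 0`.
theorem psi3_eq_sum_of_isPrimitiveRoot {k : ℕ} {ζ : ℂ} (hk : 0 < k)
    (hζ : IsPrimitiveRoot ζ (2 * (2 * k))) :
    psi3 ζ = ∑ n ∈ Finset.range k, (∏ j ∈ Finset.range n, (1 + ζ ^ (2 * j + 2))) * ζ ^ (n + 1) := by
  have hm : 0 < 2 * k := by omega
  have hlast : -ζ ^ 2 * (ζ ^ 2) ^ (k - 1) = 1 := by
    rw [neg_mul, mul_pow_sub_one hk.ne', ← pow_mul,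
      pow_eq_neg_one_of_isPrimitiveRoot_two_mul hζ hm, neg_neg]
  have hzero : ∀ n ∉ Finset.range k, qP (-ζ ^ 2) (ζ ^ 2) n = 0 := fun n hn =>
    qP_eq_zero (by rw [Finset.mem_range] at hn; omega) hlast
  have hs : Summable fun n : ℕ => ‖qP (-ζ ^ 2) (ζ ^ 2) n * ζ ^ n‖ :=
    summable_of_ne_finset_zero (s := Finset.range k) fun n hn => by
      rw [hzero n hn, zero_mul, norm_zero]
  rw [← tsum_qP_mul_pow_eq_psi3 (hζ.ne_zero (by omega)) (hζ.norm'_eq_one (by omega)).le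
      (one_sub_mul_sq_pow_ne_zero hζ) hs (summable_psi3_of_isPrimitiveRoot hζ hm),
    tsum_eq_sum fun n hn => by rw [hzero n hn, zero_mul]]
  refine Finset.sum_congr rfl fun n _ => congrArg (· * _) (Finset.prod_congr rfl fun j _ => ?_)
  ring

theorem stmt2 (k : ℕ) (hk : 0 < k) (ζ : ℂ) (hζ : IsPrimitiveRoot ζ (4 * k)) :
    Tendsto (fun t : ℝ =>
        phi3 ((t : ℂ) * ζ) -
          qPInf (((t : ℂ) * ζ) ^ 2) (((t : ℂ) * ζ) ^ 2) *
            qPInf (-((t : ℂ) * ζ)) (((t : ℂ) * ζ) ^ 2) *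
            qPInf (-((t : ℂ) * ζ)) (((t : ℂ) * ζ) ^ 2) /
          (qPInf (-((t : ℂ) * ζ) ^ 2) (((t : ℂ) * ζ) ^ 2) *
            qPInf ((t : ℂ) * ζ) (((t : ℂ) * ζ) ^ 2)))
      (nhdsWithin 1 (Set.Ioo (0 : ℝ) 1))
      (nhds (-2 * ∑ n ∈ Finset.range k,
          (∏ j ∈ Finset.range n, (1 + ζ ^ (2 * j + 2))) * ζ ^ (n + 1))) := by
  have hζ' : IsPrimitiveRoot ζ (2 * (2 * k)) := by rwa [← mul_assoc]
  rw [← psi3_eq_sum_of_isPrimitiveRoot hk hζ']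
  exact tendsto_phi3_sub hζ' (by omega)
end

section
/- If ζ is a primitive root of unity of even order 2k, then as q approaches ζ radially within the unit disk, lim_{q→ζ} ( f₀(q) − [4q(q⁴,q¹⁶,q²⁰;q²⁰)_∞/(q²;q⁴)_∞ + (q²,q³,q⁵;q⁵)_∞/(−q;q)_∞] ) = −2 Σ_{n=0}^{k−1} (1+ζ)(1+ζ²)···(1+ζⁿ) ζ^{(n+1)(n+2)/2}. -/
open scoped BigOperators
open Filter

/-- Ramanujan's fifth order mock theta function f₀ -/
noncomputable def f0 (q : ℂ) : ℂ := ∑' n : ℕ, q ^ (n ^ 2) / qP (-q) q n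

/-!
Summing `q^{n²}/(-q;q)_n` over all integers `n` instead of the natural numbers turns `f₀` into
`f₀ + 2ψ₀`, where `ψ₀(q) = ∑ (1+q)⋯(1+qⁿ) q^{(n+1)(n+2)/2}`, and this bilateral series is modular:
expanding `(-q^{n+1};q)_∞` by Euler's theorem, completing the square and evaluating the even and odd
parts by Rogers–Szegő polynomials gives `ϑ₃(q) G(-q) + q ϑ₂(q) H(q⁴)` with the Rogers–Ramanujan
functions `G` and `H`. The identity `ϑ₃(q) G(-q) = ϑ₃(-q) G(q) + q ϑ₂(q) H(q⁴)` then leaves only the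
products of the theorem. Its two sides differ by a function `D` whose dissections modulo `4` yield
`D(q) = a(q) D(q¹⁶)` with `a(q) → 0` as `q → 0`, so `D = 0`.

Hence the bracketed difference in the theorem is `-2ψ₀`. At a primitive root of unity `ζ` of order
`2k` the series `ψ₀` terminates since `1 + ζᵏ = 0`. It is radially continuous at `ζ` by dominated
convergence: over a full period the factors `|x ζʲ| |1 + x ζʲ|` multiply to `x^{2k}(1 - x^{2k})`,
which is at most `1/4`, so the terms decay geometrically, uniformly in `q` near `ζ`.
-/

namespace MockTheta

open Set
open scoped Topology

/-! ### Infinite products -/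

theorem summable_norm_neg_mul_pow (a : ℂ) {q : ℂ} (hq : ‖q‖ < 1) :
    Summable fun n : ℕ => ‖-(a * q ^ n)‖ := by
  simpa only [norm_neg, norm_mul, norm_pow] using
    (summable_geometric_of_lt_one (norm_nonneg q) hq).mul_left ‖a‖

theorem multipliable_one_sub_mul_pow (a : ℂ) {q : ℂ} (hq : ‖q‖ < 1) :
    Multipliable fun n : ℕ => 1 - a * q ^ n := by
  simpa only [sub_eq_add_neg] using
    multipliable_one_add_of_summable (summable_norm_neg_mul_pow a hq)

theorem qP_zero (a q : ℂ) : qP a q 0 = 1 := Finset.prod_range_zero _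

theorem qP_succ (a q : ℂ) (n : ℕ) : qP a q (n + 1) = qP a q n * (1 - a * q ^ n) :=
  Finset.prod_range_succ _ _

theorem tendsto_qP (a : ℂ) {q : ℂ} (hq : ‖q‖ < 1) : Tendsto (qP a q) atTop (𝓝 (qPInf a q)) :=
  (multipliable_one_sub_mul_pow a hq).hasProd.tendsto_prod_nat

theorem qPInf_eq_one_sub_mul (a : ℂ) {q : ℂ} (hq : ‖q‖ < 1) :
    qPInf a q = (1 - a) * qPInf (a * q) q := by
  have h := tprod_eq_zero_mul' (f := fun n : ℕ => 1 - a * q ^ n) (by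
    simpa only [pow_succ', mul_assoc] using multipliable_one_sub_mul_pow (a * q) hq)
  simpa only [qPInf, pow_zero, mul_one, pow_succ', mul_assoc] using h

theorem qPInf_eq_qP_mul (a : ℂ) {q : ℂ} (hq : ‖q‖ < 1) (n : ℕ) :
    qPInf a q = qP a q n * qPInf (a * q ^ n) q := by
  induction n with
  | zero => simp [qP_zero]
  | succ n ih =>
    rw [ih, qPInf_eq_one_sub_mul (a * q ^ n) hq, qP_succ, mul_assoc, mul_assoc, pow_succ]

theorem one_sub_ne_zero_of_norm_lt_one {x : ℂ} (hx : ‖x‖ < 1) : 1 - x ≠ 0 := by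
  rintro h
  rw [← sub_eq_zero.mp h, norm_one] at hx
  exact lt_irrefl _ hx

theorem norm_pow_lt_one {q : ℂ} (hq : ‖q‖ < 1) {n : ℕ} (hn : n ≠ 0) : ‖q ^ n‖ < 1 := by
  rw [norm_pow]
  exact pow_lt_one₀ (norm_nonneg _) hq hn

theorem norm_mul_pow_le (a : ℂ) {q : ℂ} (hq : ‖q‖ < 1) (n : ℕ) : ‖a * q ^ n‖ ≤ ‖a‖ := by
  rw [norm_mul, norm_pow]
  exact mul_le_of_le_one_right (norm_nonneg _) (pow_le_one₀ (norm_nonneg _) hq.le)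

theorem one_sub_mul_pow_ne_zero {a q : ℂ} (hq : ‖q‖ < 1) (ha : ‖a‖ < 1) (n : ℕ) :
    1 - a * q ^ n ≠ 0 :=
  one_sub_ne_zero_of_norm_lt_one ((norm_mul_pow_le a hq n).trans_lt ha)

theorem qP_ne_zero {a q : ℂ} (hq : ‖q‖ < 1) (ha : ‖a‖ < 1) (n : ℕ) : qP a q n ≠ 0 :=
  Finset.prod_ne_zero_iff.mpr fun i _ => one_sub_mul_pow_ne_zero hq ha i

theorem qPInf_ne_zero {a q : ℂ} (hq : ‖q‖ < 1) (ha : ‖a‖ < 1) : qPInf a q ≠ 0 := by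
  have h := tprod_one_add_ne_zero_of_summable (f := fun n : ℕ => -(a * q ^ n))
    (fun n => by simpa only [sub_eq_add_neg] using one_sub_mul_pow_ne_zero hq ha n)
    (summable_norm_neg_mul_pow a hq)
  simpa only [qPInf, sub_eq_add_neg] using h

theorem qPInf_mul_qPInf_neg (a : ℂ) {q : ℂ} (hq : ‖q‖ < 1) :
    qPInf a q * qPInf (-a) q = qPInf (a ^ 2) (q ^ 2) := by
  unfold qPInf
  rw [← (multipliable_one_sub_mul_pow a hq).tprod_mul (multipliable_one_sub_mul_pow (-a) hq)]
  exact tprod_congr fun n => by ring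

theorem qPInf_sq_mul_qPInf_mul_sq (a : ℂ) {q : ℂ} (hq : ‖q‖ < 1) :
    qPInf a (q ^ 2) * qPInf (a * q) (q ^ 2) = qPInf a q := by
  have h2 : ‖q ^ 2‖ < 1 := norm_pow_lt_one hq two_ne_zero
  have heven : ∀ n : ℕ, 1 - a * q ^ (2 * n) = 1 - a * (q ^ 2) ^ n := fun n => by ring
  have hodd : ∀ n : ℕ, 1 - a * q ^ (2 * n + 1) = 1 - a * q * (q ^ 2) ^ n := fun n => by ring
  unfold qPInf
  rw [← tprod_even_mul_odd (f := fun n : ℕ => 1 - a * q ^ n)]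
  · simp_rw [heven, hodd]
  · simpa only [heven] using multipliable_one_sub_mul_pow a h2
  · simpa only [hodd] using multipliable_one_sub_mul_pow (a * q) h2

theorem qPInf_self_sq_mul {q : ℂ} (hq : ‖q‖ < 1) :
    qPInf q (q ^ 2) * qPInf (q ^ 2) (q ^ 2) = qPInf q q := by
  simpa only [sq] using qPInf_sq_mul_qPInf_mul_sq q hq

/-- Euler's theorem that partitions into odd parts and into distinct parts are equinumerous. -/
theorem qPInf_self_sq_mul_qPInf_neg {q : ℂ} (hq : ‖q‖ < 1) :
    qPInf q (q ^ 2) * qPInf (-q) q = 1 := by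
  have h2 : ‖q ^ 2‖ < 1 := norm_pow_lt_one hq two_ne_zero
  refine mul_right_cancel₀ (qPInf_ne_zero h2 h2) ?_
  linear_combination qPInf (-q) q * qPInf_self_sq_mul hq + qPInf_mul_qPInf_neg q hq

theorem norm_qPInf_sub_one_le (a : ℂ) {q : ℂ} (hq : ‖q‖ < 1) :
    ‖qPInf a q - 1‖ ≤ Real.exp (‖a‖ / (1 - ‖q‖)) - 1 := by
  refine le_of_tendsto ((tendsto_qP a hq).sub_const 1).norm (Eventually.of_forall fun n => ?_)
  have hsum : ∑ i ∈ Finset.range n, ‖-(a * q ^ i)‖ ≤ ‖a‖ / (1 - ‖q‖) := by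
    refine ((summable_norm_neg_mul_pow a hq).sum_le_tsum _ fun _ _ => norm_nonneg _).trans_eq ?_
    simp only [norm_neg, norm_mul, norm_pow, tsum_mul_left,
      tsum_geometric_of_lt_one (norm_nonneg q) hq, div_eq_mul_inv]
  calc ‖qP a q n - 1‖ = ‖∏ i ∈ Finset.range n, (1 + -(a * q ^ i)) - 1‖ := by
        simp only [qP, sub_eq_add_neg]
    _ ≤ Real.exp (∑ i ∈ Finset.range n, ‖-(a * q ^ i)‖) - 1 :=
        Finset.norm_prod_one_add_sub_one_le _ _
    _ ≤ Real.exp (‖a‖ / (1 - ‖q‖)) - 1 := by gcongr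

theorem tendsto_qPInf_one {ι : Type*} {l : Filter ι} {a q : ι → ℂ} (ha : Tendsto a l (𝓝 0))
    (hq : Tendsto q l (𝓝 0)) : Tendsto (fun i => qPInf (a i) (q i)) l (𝓝 1) := by
  rw [tendsto_iff_norm_sub_tendsto_zero]
  have hbound : Tendsto (fun i => Real.exp (‖a i‖ / (1 - ‖q i‖)) - 1) l (𝓝 0) := by
    simpa using ((ha.norm.div (tendsto_const_nhds.sub hq.norm) (by simp)).rexp).sub_const 1
  refine squeeze_zero' (Eventually.of_forall fun _ => norm_nonneg _) ?_ hbound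
  filter_upwards [hq.norm.eventually_lt_const (by simp : ‖(0 : ℂ)‖ < 1)] with i hi
  exact norm_qPInf_sub_one_le (a i) hi

/-! ### Reciprocals of `(q;q)_n` -/

/-- The reciprocal `1/(q;q)_n`, extended by `0` to `n < 0`. This is the value for which
`(1 - qⁿ)/(q;q)_n = 1/(q;q)_{n-1}` persists at `n = 0`, so that sums over `ℕ` can be treated as
sums over `ℤ` and reindexed freely. -/
noncomputable def invQP (q : ℂ) (n : ℤ) : ℂ := if n < 0 then 0 else (qP q q n.toNat)⁻¹

theorem invQP_of_neg (q : ℂ) {n : ℤ} (hn : n < 0) : invQP q n = 0 := if_pos hn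

theorem invQP_natCast (q : ℂ) (n : ℕ) : invQP q n = (qP q q n)⁻¹ := by simp [invQP]

theorem invQP_zero (q : ℂ) : invQP q 0 = 1 := by simp [invQP, qP_zero]

theorem one_sub_zpow_ne_zero {q : ℂ} (hq : ‖q‖ < 1) {n : ℤ} (hn : n ≠ 0) : 1 - q ^ n ≠ 0 := by
  intro h
  have h1 : ‖q‖ ^ n = 1 := by rw [← norm_zpow, ← sub_eq_zero.mp h, norm_one]
  exact hn ((zpow_eq_one_iff_right₀ (norm_nonneg q) hq.ne).mp h1)

theorem one_sub_zpow_mul_invQP {q : ℂ} (hq : ‖q‖ < 1) (n : ℤ) :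
    (1 - q ^ n) * invQP q n = invQP q (n - 1) := by
  rcases lt_trichotomy n 0 with hn | rfl | hn
  · rw [invQP_of_neg q hn, invQP_of_neg q (by lia), mul_zero]
  · rw [zpow_zero, sub_self, zero_mul, invQP_of_neg q (by lia)]
  · obtain ⟨m, rfl⟩ := Int.eq_succ_of_zero_lt hn
    have hm : 1 - q * q ^ m ≠ 0 := one_sub_mul_pow_ne_zero hq hq m
    rw [← Nat.cast_succ, invQP_natCast, qP_succ, zpow_natCast, Nat.cast_succ,
      add_sub_cancel_right, invQP_natCast, pow_succ']
    field_simp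

theorem exists_norm_invQP_le {q : ℂ} (hq : ‖q‖ < 1) : ∃ C : ℝ, ∀ n, ‖invQP q n‖ ≤ C := by
  obtain ⟨C, hC⟩ := ((tendsto_qP q hq).inv₀ (qPInf_ne_zero hq hq)).norm.bddAbove_range
  have hC0 : 0 ≤ C := (norm_nonneg _).trans (hC ⟨0, rfl⟩)
  refine ⟨C, fun n => ?_⟩
  rcases lt_or_ge n 0 with hn | hn
  · rwa [invQP_of_neg q hn, norm_zero]
  · lift n to ℕ using hn
    rw [invQP_natCast]
    exact hC ⟨n, rfl⟩

theorem invQP_mul_qPInf {q : ℂ} (hq0 : q ≠ 0) (hq : ‖q‖ < 1) (n : ℤ) :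
    invQP q n * qPInf q q = qPInf (q ^ (n + 1)) q := by
  rcases lt_or_ge n 0 with hn | hn
  · obtain ⟨m, rfl⟩ : ∃ m : ℕ, n = -m - 1 := ⟨(-n - 1).toNat, by lia⟩
    have hm : 1 - q ^ (-m - 1 + 1 : ℤ) * q ^ m = 0 := by
      rw [← zpow_natCast q m, ← zpow_add₀ hq0]
      simp
    rw [invQP_of_neg q hn, zero_mul, qPInf_eq_qP_mul _ hq (m + 1), qP_succ, hm, mul_zero, zero_mul]
  · lift n to ℕ using hn
    rw [invQP_natCast, qPInf_eq_qP_mul q hq n, inv_mul_cancel_left₀ (qP_ne_zero hq hq n),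
      ← Nat.cast_succ, zpow_natCast, pow_succ']

theorem summable_of_norm_le_mul {ι : Type*} {f g : ι → ℂ} (C : ℝ) (hg : Summable g)
    (h : ∀ i, ‖f i‖ ≤ C * ‖g i‖) : Summable f :=
  Summable.of_norm_bounded (hg.norm.mul_left C) h

theorem summable_mul_invQP {ι : Type*} {q : ℂ} (hq : ‖q‖ < 1) {g : ι → ℂ} (hg : Summable g)
    (a : ι → ℤ) : Summable fun i => g i * invQP q (a i) := by
  obtain ⟨C, hC⟩ := exists_norm_invQP_le hq
  refine summable_of_norm_le_mul C hg fun i => ?_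
  rw [norm_mul, mul_comm]
  gcongr
  exact hC (a i)

theorem summable_zpow_mul_invQP {x q : ℂ} (hq : ‖q‖ < 1) (hx : ‖x‖ < 1) :
    Summable fun j : ℤ => x ^ j * invQP q j := by
  have hsupp : ∀ j ∉ range ((↑) : ℕ → ℤ), x ^ j * invQP q j = 0 := fun j hj => by
    rw [invQP_of_neg q (by_contra fun h => hj ⟨j.toNat, by lia⟩), mul_zero]
  refine (Nat.cast_injective.summable_iff hsupp).mp ?_
  simpa only [Function.comp_def, zpow_natCast] using
    summable_mul_invQP hq (summable_geometric_of_norm_lt_one hx) (↑)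

theorem invQP_mul_invQP_eq_zero (q : ℂ) {a b : ℤ} (h : a < 0 ∨ b < 0) :
    invQP q a * invQP q b = 0 := by
  rcases h with h | h
  · rw [invQP_of_neg q h, zero_mul]
  · rw [invQP_of_neg q h, mul_zero]

theorem summable_mul_invQP_add_mul_invQP_sub (q : ℂ) (g : ℤ → ℂ) (a b : ℤ) :
    Summable fun s : ℤ => g s * (invQP q (a + s) * invQP q (b - s)) := by
  refine summable_of_hasFiniteSupport ((finite_Icc (-a) b).subset fun s hs => ?_)
  by_contra h
  rw [mem_Icc, not_and_or, not_le, not_le] at h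
  exact hs (mul_eq_zero_of_right _ (invQP_mul_invQP_eq_zero q (by lia)))

/-! ### Triangular numbers and Gaussian sums -/

/-- The triangular number `n(n-1)/2` of an integer `n`, the exponent of the general term of
theta series. The division is exact. -/
def tri (n : ℤ) : ℤ := n * (n - 1) / 2

theorem two_mul_tri (n : ℤ) : 2 * tri n = n * (n - 1) :=
  Int.mul_ediv_cancel' (Int.even_mul_pred_self n).two_dvd

theorem tri_zero : tri 0 = 0 := rfl

theorem tri_add (m n : ℤ) : tri (m + n) = tri m + tri n + m * n := by
  linarith [two_mul_tri m, two_mul_tri n, two_mul_tri (m + n)]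

theorem tri_add_one (n : ℤ) : tri (n + 1) = tri n + n := by
  linarith [two_mul_tri n, two_mul_tri (n + 1)]

theorem tri_neg (n : ℤ) : tri (-n) = tri n + n := by
  linarith [two_mul_tri n, two_mul_tri (-n)]

theorem sq_zpow_tri (q : ℂ) (n : ℤ) : (q ^ 2) ^ tri n = q ^ (n ^ 2 - n) := by
  rw [← zpow_natCast q 2, ← zpow_mul, Nat.cast_ofNat, two_mul_tri]
  congr 1
  ring

theorem summable_zpow_mul_zpow_tri_nat {z q : ℂ} (hz : z ≠ 0) (hq0 : q ≠ 0) (hq : ‖q‖ < 1) :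
    Summable fun n : ℕ => z ^ (n : ℤ) * q ^ tri n := by
  have hratio : ∀ n : ℕ, ‖z ^ ((n + 1 : ℕ) : ℤ) * q ^ tri ((n + 1 : ℕ) : ℤ)‖ /
      ‖z ^ (n : ℤ) * q ^ tri n‖ = ‖z‖ * ‖q‖ ^ n := by
    intro n
    have := zpow_ne_zero (n : ℤ) hz
    have := zpow_ne_zero (tri n) hq0
    rw [← norm_div, Nat.cast_succ, tri_add_one, zpow_add_one₀ hz, zpow_add₀ hq0, zpow_natCast q n,
      ← norm_pow, ← norm_mul]
    congr 1
    field_simp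
  refine summable_of_ratio_test_tendsto_lt_one zero_lt_one
    (Eventually.of_forall fun n => mul_ne_zero (zpow_ne_zero _ hz) (zpow_ne_zero _ hq0)) ?_
  simp_rw [hratio]
  simpa using (tendsto_pow_atTop_nhds_zero_of_lt_one (norm_nonneg q) hq).const_mul ‖z‖

theorem summable_zpow_mul_zpow_tri {z q : ℂ} (hz : z ≠ 0) (hq0 : q ≠ 0) (hq : ‖q‖ < 1) :
    Summable fun n : ℤ => z ^ n * q ^ tri n := by
  refine Summable.of_nat_of_neg (summable_zpow_mul_zpow_tri_nat hz hq0 hq) ?_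
  refine (summable_zpow_mul_zpow_tri_nat (div_ne_zero hq0 hz) hq0 hq).congr fun n => ?_
  rw [tri_neg, zpow_add₀ hq0, div_zpow, zpow_neg]
  ring

theorem summable_zpow_mul_zpow_sq {z q : ℂ} (hz : z ≠ 0) (hq0 : q ≠ 0) (hq : ‖q‖ < 1) :
    Summable fun n : ℤ => z ^ n * q ^ (n ^ 2) := by
  refine (summable_zpow_mul_zpow_tri (mul_ne_zero hz hq0) (pow_ne_zero 2 hq0)
    (norm_pow_lt_one hq two_ne_zero)).congr fun n => ?_
  rw [sq_zpow_tri, mul_zpow, mul_assoc, ← zpow_add₀ hq0, add_sub_cancel]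

theorem summable_zpow_sq_add_mul {q : ℂ} (hq0 : q ≠ 0) (hq : ‖q‖ < 1) (k : ℤ) :
    Summable fun n : ℤ => q ^ (n ^ 2 + k * n) :=
  (summable_zpow_mul_zpow_sq (zpow_ne_zero k hq0) hq0 hq).congr fun n => by
    rw [zpow_add₀ hq0, ← zpow_mul, mul_comm]

/-! ### Bilateral double sums -/

theorem tsum_add_right {G E : Type*} [AddGroup G] [AddCommMonoid E] [TopologicalSpace E]
    (f : G → E) (k : G) : ∑' j, f (j + k) = ∑' j, f j :=
  (Equiv.addRight k).tsum_eq f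

section Shear

variable {G E : Type*} [AddCommGroup G] [NormedAddCommGroup E]

theorem summable_sub_iff {F : G → G → E} :
    (Summable fun p : G × G => F p.1 (p.2 - p.1)) ↔ Summable fun p : G × G => F p.1 p.2 :=
  (Equiv.prodShear (Equiv.refl G) Equiv.subRight).summable_iff (f := fun p : G × G => F p.1 p.2)

theorem tsum_tsum_eq_tsum_tsum_sub [CompleteSpace E] {F : G → G → E}
    (hF : Summable fun p : G × G => F p.1 p.2) :
    ∑' i, ∑' j, F i j = ∑' n, ∑' i, F i (n - i) := by
  rw [Summable.tsum_comm (f := fun i n => F i (n - i)) (summable_sub_iff.mpr hF)]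
  exact tsum_congr fun i => ((Equiv.subRight i).tsum_eq (F i)).symm

end Shear

theorem summable_mul_prod {ι κ : Type*} {f : ι → ℂ} {g : κ → ℂ} (hf : Summable f)
    (hg : Summable g) : Summable fun p : ι × κ => f p.1 * g p.2 :=
  summable_mul_of_summable_norm hf.norm hg.norm

/-! ### Euler's expansions -/

/-- The finite `q`-binomial theorem for `(1;q)_N`. -/
theorem tsum_neg_one_zpow_mul_zpow_tri {q : ℂ} (hq0 : q ≠ 0) (hq : ‖q‖ < 1) (N : ℤ) :
    ∑' m : ℤ, (-1) ^ m * q ^ tri m * (invQP q m * invQP q (N - m)) = if N = 0 then 1 else 0 := by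
  split_ifs with hN
  · rw [hN, tsum_eq_single 0 fun m hm =>
      mul_eq_zero_of_right _ (invQP_mul_invQP_eq_zero q (by lia))]
    simp [tri_zero, invQP_zero]
  refine (mul_eq_zero.mp ?_).resolve_left (one_sub_zpow_ne_zero hq hN)
  have hS : ∀ (g : ℤ → ℂ) a b, Summable fun m => g m * (invQP q (m + a) * invQP q (b - m)) :=
    fun g a b => by
      simpa only [add_comm a] using summable_mul_invQP_add_mul_invQP_sub q g a b
  have hS0 : ∀ (g : ℤ → ℂ) b, Summable fun m => g m * (invQP q m * invQP q (b - m)) :=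
    fun g b => by simpa only [add_zero] using hS g 0 b
  have hsplit : ∀ m : ℤ, (1 - q ^ N) * ((-1) ^ m * q ^ tri m * (invQP q m * invQP q (N - m)))
      = (-1) ^ m * q ^ tri m * (invQP q (m + -1) * invQP q (N - m))
        + (-1) ^ m * q ^ (tri m + m) * (invQP q m * invQP q (N - 1 - m)) := fun m => by
    have hqN : q ^ N = q ^ m * q ^ (N - m) := by rw [← zpow_add₀ hq0, add_sub_cancel]
    rw [← sub_eq_add_neg, sub_right_comm, ← one_sub_zpow_mul_invQP hq m,
      ← one_sub_zpow_mul_invQP hq (N - m), zpow_add₀ hq0, hqN]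
    ring
  have hshift : ∑' m : ℤ, (-1) ^ m * q ^ tri m * (invQP q (m + -1) * invQP q (N - m))
      = -∑' m : ℤ, (-1) ^ m * q ^ (tri m + m) * (invQP q m * invQP q (N - 1 - m)) := by
    rw [← tsum_add_right _ (1 : ℤ), ← tsum_neg]
    refine tsum_congr fun m => ?_
    rw [zpow_add_one₀ (by norm_num), tri_add_one, add_neg_cancel_right, sub_add_eq_sub_sub_swap]
    ring
  rw [← tsum_mul_left, tsum_congr hsplit, (hS _ _ _).tsum_add (hS0 _ _), hshift, neg_add_cancel]

theorem eq_qPInf_of_forall_eq_one_sub_mul {f : ℂ → ℂ} {x q : ℂ} (hq : ‖q‖ < 1)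
    (hstep : ∀ n : ℕ, f (x * q ^ n) = (1 - x * q ^ n) * f (x * q ^ n * q))
    (hlim : Tendsto (fun n : ℕ => f (x * q ^ n)) atTop (𝓝 1)) : f x = qPInf x q := by
  have hiter : ∀ n, f x = qP x q n * f (x * q ^ n) := by
    intro n
    induction n with
    | zero => rw [qP_zero, pow_zero, mul_one, one_mul]
    | succ n ih => rw [ih, hstep, qP_succ, pow_succ]; ring_nf
  have h := (tendsto_qP x hq).mul hlim
  simp_rw [← hiter, mul_one] at h
  exact tendsto_nhds_unique tendsto_const_nhds h

theorem tendsto_tsum_zpow_mul {ι : Type*} {l : Filter ι} {a : ℤ → ℂ} (ha : ∀ j < 0, a j = 0)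
    {x : ℂ} (hs : Summable fun j : ℤ => x ^ j * a j) {y : ι → ℂ} (hy : ∀ i, ‖y i‖ ≤ ‖x‖)
    (hy0 : Tendsto y l (𝓝 0)) : Tendsto (fun i => ∑' j : ℤ, y i ^ j * a j) l (𝓝 (a 0)) := by
  rw [← tsum_ite_eq (0 : ℤ) a]
  refine tendsto_tsum_of_dominated_convergence hs.norm (fun j => ?_)
    (Eventually.of_forall fun i j => ?_)
  · rcases lt_trichotomy j 0 with hj | rfl | hj
    · simpa [ha j hj] using tendsto_const_nhds
    · simpa using tendsto_const_nhds
    · lift j to ℕ using hj.le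
      have hj0 : j ≠ 0 := by rintro rfl; exact lt_irrefl _ hj
      simpa [hj0] using (hy0.pow j).mul_const (a j)
  · rcases lt_or_ge j 0 with hj | hj
    · simp [ha j hj]
    · lift j to ℕ using hj
      simp only [norm_mul, zpow_natCast, norm_pow]
      gcongr
      exact hy i

theorem summable_zpow_mul_zpow_tri_mul_invQP {x q : ℂ} (hx : x ≠ 0) (hq0 : q ≠ 0)
    (hq : ‖q‖ < 1) : Summable fun j : ℤ => x ^ j * (q ^ tri j * invQP q j) := by
  simpa only [mul_assoc, id] using
    summable_mul_invQP hq (summable_zpow_mul_zpow_tri hx hq0 hq) id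

theorem tsum_zpow_mul_zpow_tri_mul_invQP {x q : ℂ} (hx : x ≠ 0) (hq0 : q ≠ 0) (hq : ‖q‖ < 1) :
    ∑' j : ℤ, (-x) ^ j * (q ^ tri j * invQP q j) = qPInf x q := by
  have hS : ∀ y : ℂ, y ≠ 0 → Summable fun j : ℤ => (-y) ^ j * (q ^ tri j * invQP q j) :=
    fun y hy => summable_zpow_mul_zpow_tri_mul_invQP (neg_ne_zero.mpr hy) hq0 hq
  have hstep : ∀ y : ℂ, y ≠ 0 → ∑' j : ℤ, (-y) ^ j * (q ^ tri j * invQP q j)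
      = (1 - y) * ∑' j : ℤ, (-(y * q)) ^ j * (q ^ tri j * invQP q j) := by
    intro y hy
    have hdiff : ∑' j : ℤ, ((-y) ^ j * (q ^ tri j * invQP q j)
          - (-(y * q)) ^ j * (q ^ tri j * invQP q j))
        = -y * ∑' j : ℤ, (-(y * q)) ^ j * (q ^ tri j * invQP q j) := by
      rw [← tsum_add_right _ (1 : ℤ), ← tsum_mul_left]
      refine tsum_congr fun j => ?_
      have h := one_sub_zpow_mul_invQP hq (j + 1)
      rw [add_sub_cancel_right] at h
      rw [← h, neg_mul_eq_neg_mul, mul_zpow, mul_zpow, zpow_add_one₀ (neg_ne_zero.mpr hy),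
        tri_add_one, zpow_add₀ hq0 (tri j) j]
      ring
    rw [(hS y hy).tsum_sub (hS _ (mul_ne_zero hy hq0))] at hdiff
    linear_combination hdiff
  refine eq_qPInf_of_forall_eq_one_sub_mul
    (f := fun y => ∑' j : ℤ, (-y) ^ j * (q ^ tri j * invQP q j)) hq
    (fun n => hstep _ (mul_ne_zero hx (pow_ne_zero n hq0))) ?_
  have hlim : Tendsto (fun n : ℕ => -(x * q ^ n)) atTop (𝓝 0) := by
    simpa using ((tendsto_pow_atTop_nhds_zero_of_norm_lt_one hq).const_mul x).neg
  have h := tendsto_tsum_zpow_mul (a := fun j => q ^ tri j * invQP q j)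
    (fun j hj => by rw [invQP_of_neg q hj, mul_zero]) (hS x hx)
    (fun n => by simpa only [norm_neg] using norm_mul_pow_le x hq n) hlim
  simpa only [tri_zero, zpow_zero, invQP_zero, mul_one] using h

theorem qPInf_mul_tsum_zpow_mul_invQP {x q : ℂ} (hx0 : x ≠ 0) (hq0 : q ≠ 0) (hq : ‖q‖ < 1)
    (hx : ‖x‖ < 1) : qPInf x q * ∑' j : ℤ, x ^ j * invQP q j = 1 := by
  have hF := summable_mul_prod
    (summable_zpow_mul_zpow_tri_mul_invQP (neg_ne_zero.mpr hx0) hq0 hq)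
    (summable_zpow_mul_invQP hq hx)
  rw [← tsum_zpow_mul_zpow_tri_mul_invQP hx0 hq0 hq, ← tsum_mul_right]
  simp_rw [← tsum_mul_left]
  rw [tsum_tsum_eq_tsum_tsum_sub (F := fun i j =>
    (-x) ^ i * (q ^ tri i * invQP q i) * (x ^ j * invQP q j)) hF]
  have hinner : ∀ n : ℤ, ∑' i : ℤ, (-x) ^ i * (q ^ tri i * invQP q i)
      * (x ^ (n - i) * invQP q (n - i)) = x ^ n * if n = 0 then 1 else 0 := fun n => by
    rw [← tsum_neg_one_zpow_mul_zpow_tri hq0 hq, ← tsum_mul_left]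
    refine tsum_congr fun i => ?_
    have hxi := zpow_ne_zero i hx0
    rw [neg_eq_neg_one_mul x, mul_zpow, zpow_sub₀ hx0]
    field_simp
  simp [hinner]

/-! ### Jacobi's triple product -/

theorem jacobi_triple_product {z q : ℂ} (hz : z ≠ 0) (hq0 : q ≠ 0) (hq : ‖q‖ < 1)
    (hzq : ‖q / z‖ < 1) :
    ∑' n : ℤ, (-z) ^ n * q ^ tri n = qPInf z q * qPInf (q / z) q * qPInf q q := by
  have hz' : -z ≠ 0 := neg_ne_zero.mpr hz
  set f : ℤ → ℂ := fun n => (-z) ^ n * q ^ tri n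
  set g : ℤ → ℂ := fun j => (q / z) ^ j * invQP q j
  have hF : Summable fun p : ℤ × ℤ => f (p.2 + p.1) * g p.1 := by
    rw [← summable_sub_iff (F := fun j m => f (m + j) * g j)]
    simpa only [sub_add_cancel, mul_comm (f _)] using summable_mul_prod
      (summable_zpow_mul_invQP hq hzq) (summable_zpow_mul_zpow_tri hz' hq0 hq)
  have hexpand : qPInf z q * qPInf q q = ∑' m : ℤ, ∑' j : ℤ, f (m + j) * g j := by
    rw [← tsum_zpow_mul_zpow_tri_mul_invQP hz hq0 hq, ← tsum_mul_right]
    refine tsum_congr fun m => ?_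
    rw [mul_assoc, mul_assoc, invQP_mul_qPInf hq0 hq,
      ← tsum_zpow_mul_zpow_tri_mul_invQP (zpow_ne_zero _ hq0) hq0 hq, ← tsum_mul_left,
      ← tsum_mul_left]
    refine tsum_congr fun j => ?_
    have := zpow_ne_zero j hz
    simp only [f, g]
    rw [tri_add, zpow_add₀ hq0 m, zpow_add₀ hq0 _ (m * j), zpow_add₀ hq0, zpow_add₀ hz', zpow_one,
      neg_eq_neg_one_mul (_ * q), neg_eq_neg_one_mul z, mul_zpow, mul_zpow, mul_zpow, mul_zpow,
      div_zpow, zpow_mul]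
    field_simp
  rw [Summable.tsum_comm (f := fun j m => f (m + j) * g j) hF] at hexpand
  simp only [tsum_mul_right, tsum_add_right f, tsum_mul_left] at hexpand
  linear_combination (-qPInf (q / z) q) * hexpand - (∑' n, f n) *
    qPInf_mul_tsum_zpow_mul_invQP (div_ne_zero hq0 hz) hq0 hq hzq

/-! ### Bailey's lemma and the Rogers–Ramanujan identities -/

/-- Cauchy's identity, the Durfee rectangle expansion of the partition generating function. -/
theorem qPInf_mul_tsum_zpow_sq_mul_invQP_mul_invQP {q : ℂ} (hq0 : q ≠ 0) (hq : ‖q‖ < 1) (j : ℤ) :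
    qPInf q q * ∑' m : ℤ, q ^ (m ^ 2 + j * m) * (invQP q m * invQP q (m + j)) = 1 := by
  set g : ℤ → ℂ := fun n => (-1) ^ n * q ^ (j * n + tri (n + 1))
  set h : ℤ → ℂ := fun m => (-1) ^ m * q ^ tri m
  have hg : Summable g := by
    refine (summable_zpow_mul_zpow_tri (neg_ne_zero.mpr (zpow_ne_zero (j + 1) hq0)) hq0 hq).congr
      fun n => ?_
    simp only [g]
    rw [neg_eq_neg_one_mul, mul_zpow, ← zpow_mul, mul_assoc, ← zpow_add₀ hq0, tri_add_one]
    ring_nf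
  have hh : Summable h := summable_zpow_mul_zpow_tri (by norm_num) hq0 hq
  have hF : Summable fun p : ℤ × ℤ => h p.1 * g (p.1 + p.2) * (invQP q p.1 * invQP q p.2) := by
    rw [← summable_sub_iff (F := fun m i => h m * g (m + i) * (invQP q m * invQP q i))]
    simpa only [add_sub_cancel, mul_assoc] using
      summable_mul_invQP hq (summable_mul_invQP hq (summable_mul_prod hh hg) Prod.fst)
        fun p => p.2 - p.1
  have hexpand : ∀ m : ℤ, qPInf q q * (q ^ (m ^ 2 + j * m) * (invQP q m * invQP q (m + j)))
      = ∑' i : ℤ, h m * g (m + i) * (invQP q m * invQP q i) := fun m => by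
    rw [mul_comm, mul_assoc, mul_assoc, invQP_mul_qPInf hq0 hq,
      ← tsum_zpow_mul_zpow_tri_mul_invQP (zpow_ne_zero _ hq0) hq0 hq, ← tsum_mul_left,
      ← tsum_mul_left]
    refine tsum_congr fun i => ?_
    have hpow : q ^ (m ^ 2 + j * m) * (q ^ ((m + j + 1) * i) * q ^ tri i)
        = q ^ tri m * q ^ (j * (m + i) + tri (m + i + 1)) := by
      rw [← zpow_add₀ hq0, ← zpow_add₀ hq0, ← zpow_add₀ hq0]
      congr 1
      linarith [two_mul_tri m, tri_add_one (m + i), tri_add m i]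
    have hsign : (-1 : ℂ) ^ i = (-1) ^ m * (-1) ^ (m + i) := by
      rw [← zpow_add₀ (by norm_num), ← add_assoc, ← two_mul, zpow_add₀ (by norm_num), zpow_mul]
      simp
    simp only [g, h]
    rw [neg_eq_neg_one_mul (q ^ _), mul_zpow, ← zpow_mul, hsign]
    linear_combination (-1) ^ m * (-1) ^ (m + i) * invQP q m * invQP q i *
      hpow
  rw [← tsum_mul_left, tsum_congr hexpand, tsum_tsum_eq_tsum_tsum_sub
    (F := fun m i => h m * g (m + i) * (invQP q m * invQP q i)) hF]
  have hinner : ∀ n : ℤ, ∑' m : ℤ, h m * g (m + (n - m)) * (invQP q m * invQP q (n - m))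
      = g n * if n = 0 then 1 else 0 := fun n => by
    rw [← tsum_neg_one_zpow_mul_zpow_tri hq0 hq, ← tsum_mul_left]
    refine tsum_congr fun m => ?_
    rw [add_sub_cancel]
    ring
  rw [tsum_congr hinner]
  simp [g, tri]

/-- The limiting case of Bailey's lemma for a Bailey pair relative to `q ^ c`. -/
theorem bailey_limit {q : ℂ} (hq0 : q ≠ 0) (hq : ‖q‖ < 1) (c : ℤ) {α β : ℤ → ℂ} (hα : Summable α)
    (hβ : ∀ r, β r = ∑' s : ℤ, α s * (invQP q (r - s) * invQP q (r + s + c))) :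
    qPInf q q * ∑' r : ℤ, q ^ (r ^ 2 + c * r) * β r = ∑' s : ℤ, q ^ (s ^ 2 + c * s) * α s := by
  have hF : Summable fun p : ℤ × ℤ =>
      q ^ (p.1 ^ 2 + c * p.1) * (α p.2 * (invQP q (p.1 - p.2) * invQP q (p.1 + p.2 + c))) := by
    simpa only [mul_assoc] using summable_mul_invQP hq (summable_mul_invQP hq
      (summable_mul_prod (summable_zpow_sq_add_mul hq0 hq c) hα) fun p => p.1 - p.2)
        fun p => p.1 + p.2 + c
  have hexpand : ∀ r : ℤ, q ^ (r ^ 2 + c * r) * β r = ∑' s : ℤ,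
      q ^ (r ^ 2 + c * r) * (α s * (invQP q (r - s) * invQP q (r + s + c))) := fun r => by
    rw [hβ, tsum_mul_left]
  rw [tsum_congr hexpand, ← Summable.tsum_comm (f := fun r s => q ^ (r ^ 2 + c * r) *
    (α s * (invQP q (r - s) * invQP q (r + s + c)))) hF, ← tsum_mul_left]
  refine tsum_congr fun s => ?_
  have hshift : ∀ r : ℤ, q ^ ((r + s) ^ 2 + c * (r + s)) *
        (α s * (invQP q (r + s - s) * invQP q (r + s + s + c)))
      = q ^ (s ^ 2 + c * s) * α s *
        (q ^ (r ^ 2 + (2 * s + c) * r) * (invQP q r * invQP q (r + (2 * s + c)))) := fun r => by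
    rw [add_sub_cancel_right, show r + s + s + c = r + (2 * s + c) by ring,
      show (r + s) ^ 2 + c * (r + s) = (s ^ 2 + c * s) + (r ^ 2 + (2 * s + c) * r) by ring,
      zpow_add₀ hq0]
    ring
  rw [← tsum_add_right _ s, tsum_congr hshift, tsum_mul_left, mul_left_comm,
    qPInf_mul_tsum_zpow_sq_mul_invQP_mul_invQP hq0 hq, mul_one]

theorem eq_invQP_of_forall_one_sub_zpow_mul {q : ℂ} (hq : ‖q‖ < 1) {u : ℤ → ℂ} (h0 : u 0 = 1)
    (hu : ∀ n, (1 - q ^ n) * u n = u (n - 1)) (n : ℤ) : u n = invQP q n := by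
  induction n with
  | zero => rw [h0, invQP_zero]
  | succ n ih =>
    refine mul_left_cancel₀ (one_sub_zpow_ne_zero hq (n := n + 1) (by lia)) ?_
    rw [hu, one_sub_zpow_mul_invQP hq, add_sub_cancel_right, ih]
  | pred n ih => rw [← hu, ← one_sub_zpow_mul_invQP hq, ih]

/-- The weight `(-1)ˢ q^{s(3s-1)/2}` of the pentagonal number theorem, written so that the
factor `q^{s²}` of Bailey's lemma splits off. -/
noncomputable def pentW (q : ℂ) (s : ℤ) : ℂ := (-1) ^ s * q ^ (s ^ 2 + tri s)

theorem pentW_eq {q : ℂ} (hq0 : q ≠ 0) (s : ℤ) : pentW q s = (-q) ^ s * (q ^ 3) ^ tri s := by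
  rw [pentW, neg_eq_neg_one_mul q, mul_zpow, mul_assoc, ← zpow_natCast q 3, ← zpow_mul,
    ← zpow_add₀ hq0]
  congr 2
  push_cast
  linarith [two_mul_tri s]

theorem summable_pentW {q : ℂ} (hq0 : q ≠ 0) (hq : ‖q‖ < 1) : Summable (pentW q) :=
  (summable_zpow_mul_zpow_tri (neg_ne_zero.mpr hq0) (pow_ne_zero 3 hq0)
    (norm_pow_lt_one hq three_ne_zero)).congr fun s => (pentW_eq hq0 s).symm

theorem pentW_neg {q : ℂ} (hq0 : q ≠ 0) (s : ℤ) : pentW q (-s) = pentW q s * q ^ s := by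
  rw [pentW, pentW, tri_neg, mul_assoc, ← zpow_add₀ hq0, zpow_neg, ← inv_zpow, neg_sq, add_assoc]
  norm_num

theorem pentW_neg_one_sub {q : ℂ} (hq0 : q ≠ 0) (s : ℤ) :
    pentW q (-1 - s) * q ^ (2 * (-1 - s)) = -(pentW q s * q ^ (2 * s)) := by
  have hsign : (-1 : ℂ) ^ (-1 - s) = -(-1) ^ s := by
    rw [zpow_sub₀ (by norm_num), div_eq_mul_inv, ← inv_zpow]
    norm_num
  have hexp : (-1 - s) ^ 2 + tri (-1 - s) + 2 * (-1 - s) = s ^ 2 + tri s + 2 * s := by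
    linarith [two_mul_tri s, two_mul_tri (-1 - s)]
  rw [pentW, pentW, mul_assoc, ← zpow_add₀ hq0, mul_assoc, ← zpow_add₀ hq0, hsign, hexp,
    neg_mul]

theorem summable_mul_invQP_sub_mul_invQP_add (q : ℂ) (g : ℤ → ℂ) (a b : ℤ) :
    Summable fun s : ℤ => g s * (invQP q (a - s) * invQP q (b + s)) := by
  simpa only [mul_comm (invQP q (b + _))] using summable_mul_invQP_add_mul_invQP_sub q g b a

theorem tsum_pentW_mul_zpow {q : ℂ} (hq0 : q ≠ 0) (r : ℤ) :
    ∑' s : ℤ, pentW q s * q ^ s * (invQP q (r - s) * invQP q (r + s))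
      = ∑' s : ℤ, pentW q s * (invQP q (r - s) * invQP q (r + s)) := by
  rw [← (Equiv.neg ℤ).tsum_eq fun s => pentW q s * (invQP q (r - s) * invQP q (r + s))]
  refine tsum_congr fun s => ?_
  rw [Equiv.neg_apply, pentW_neg hq0, sub_neg_eq_add, ← sub_eq_add_neg, mul_comm (invQP q (r + s))]

theorem tsum_pentW_mul_zpow_two_mul {q : ℂ} (hq0 : q ≠ 0) (r : ℤ) :
    ∑' s : ℤ, pentW q s * q ^ (2 * s) * (invQP q (r - s) * invQP q (r + 1 + s)) = 0 := by
  refine self_eq_neg.mp ?_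
  conv_lhs => rw [← (Equiv.subLeft (-1 : ℤ)).tsum_eq]
  rw [← tsum_neg]
  refine tsum_congr fun s => ?_
  rw [Equiv.subLeft_apply, pentW_neg_one_sub hq0, show r - (-1 - s) = r + 1 + s by ring,
    show r + 1 + (-1 - s) = r - s by ring]
  ring

theorem tsum_pentW_eq_tsum_add_one {q : ℂ} (hq0 : q ≠ 0) (hq : ‖q‖ < 1) (r : ℤ) :
    ∑' s : ℤ, pentW q s * (invQP q (r - s) * invQP q (r + s))
      = ∑' s : ℤ, pentW q s * q ^ s * (invQP q (r - s) * invQP q (r + 1 + s)) := by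
  have hS := summable_mul_invQP_sub_mul_invQP_add q
  have hsplit : ∀ s : ℤ, pentW q s * q ^ s * (invQP q (r - s) * invQP q (r + s))
      = pentW q s * q ^ s * (invQP q (r - s) * invQP q (r + 1 + s))
        - q ^ (r + 1) * (pentW q s * q ^ (2 * s) * (invQP q (r - s) * invQP q (r + 1 + s))) := by
    intro s
    have h := one_sub_zpow_mul_invQP hq (r + 1 + s)
    rw [add_right_comm, add_sub_cancel_right, add_right_comm] at h
    rw [← h, zpow_add₀ hq0 (r + 1), two_mul, zpow_add₀ hq0 s s]
    ring
  rw [← tsum_pentW_mul_zpow hq0, tsum_congr hsplit, (hS _ _ _).tsum_sub ((hS _ _ _).mul_left _),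
    tsum_mul_left, tsum_pentW_mul_zpow_two_mul hq0, mul_zero, sub_zero]

theorem tsum_pentW_add_one {q : ℂ} (hq0 : q ≠ 0) (hq : ‖q‖ < 1) (r : ℤ) :
    (1 - q ^ (r + 1)) * ∑' s : ℤ, pentW q s * (invQP q (r + 1 - s) * invQP q (r + 1 + s))
      = ∑' s : ℤ, pentW q s * q ^ s * (invQP q (r - s) * invQP q (r + 1 + s)) := by
  have hS := summable_mul_invQP_sub_mul_invQP_add q
  have hsplit : ∀ s : ℤ, pentW q s * q ^ s * (invQP q (r - s) * invQP q (r + 1 + s))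
      = pentW q s * q ^ s * (invQP q (r + 1 - s) * invQP q (r + 1 + s))
        - q ^ (r + 1) * (pentW q s * (invQP q (r + 1 - s) * invQP q (r + 1 + s))) := by
    intro s
    have h := one_sub_zpow_mul_invQP hq (r + 1 - s)
    rw [sub_right_comm, add_sub_cancel_right] at h
    have := zpow_ne_zero s hq0
    rw [← h, zpow_sub₀ hq0 (r + 1)]
    field_simp
  rw [tsum_congr hsplit, (hS _ _ _).tsum_sub ((hS _ _ _).mul_left _), tsum_mul_left,
    tsum_pentW_mul_zpow hq0, one_sub_mul]

/-- The Bailey pair with `β r = 1/(q;q)_r`, relative to `1`. -/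
theorem invQP_eq_tsum_pentW {q : ℂ} (hq0 : q ≠ 0) (hq : ‖q‖ < 1) (r : ℤ) :
    invQP q r = ∑' s : ℤ, pentW q s * (invQP q (r - s) * invQP q (r + s)) := by
  refine (eq_invQP_of_forall_one_sub_zpow_mul hq
    (u := fun r => ∑' s : ℤ, pentW q s * (invQP q (r - s) * invQP q (r + s))) ?_
    (fun n => ?_) r).symm
  · rw [tsum_eq_single 0 fun s hs =>
      mul_eq_zero_of_right _ (invQP_mul_invQP_eq_zero q (by lia))]
    simp [pentW, tri_zero, invQP_zero]
  · have h := tsum_pentW_add_one hq0 hq (n - 1)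
    rwa [← tsum_pentW_eq_tsum_add_one hq0 hq, sub_add_cancel] at h

/-- The first Rogers–Ramanujan function `∑ q^{n²}/(q;q)_n`. -/
noncomputable def rrG (q : ℂ) : ℂ := ∑' n : ℤ, q ^ (n ^ 2) * invQP q n

/-- The second Rogers–Ramanujan function `∑ q^{n²+n}/(q;q)_n`. -/
noncomputable def rrH (q : ℂ) : ℂ := ∑' n : ℤ, q ^ (n ^ 2 + n) * invQP q n

theorem qPInf_mul_rrG {q : ℂ} (hq0 : q ≠ 0) (hq : ‖q‖ < 1) :
    qPInf q q * rrG q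
      = qPInf (q ^ 2) (q ^ 5) * qPInf (q ^ 3) (q ^ 5) * qPInf (q ^ 5) (q ^ 5) := by
  have hbailey := bailey_limit hq0 hq 0 (summable_pentW hq0 hq) (β := invQP q)
    (by simpa only [add_zero] using invQP_eq_tsum_pentW hq0 hq)
  have hdiv : q ^ 5 / q ^ 2 = q ^ 3 := by field_simp
  have hjacobi := jacobi_triple_product (pow_ne_zero 2 hq0) (pow_ne_zero 5 hq0)
    (norm_pow_lt_one hq (by norm_num)) (by rw [hdiv]; exact norm_pow_lt_one hq three_ne_zero)
  simp only [zero_mul, add_zero] at hbailey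
  rw [hdiv] at hjacobi
  rw [rrG, hbailey, ← hjacobi]
  refine tsum_congr fun s => ?_
  rw [pentW, neg_eq_neg_one_mul (q ^ 2), mul_zpow, mul_left_comm, mul_assoc, ← zpow_natCast q 2,
    ← zpow_natCast q 5, ← zpow_mul, ← zpow_mul, ← zpow_add₀ hq0, ← zpow_add₀ hq0]
  congr 2
  push_cast
  linarith [two_mul_tri s]

theorem qPInf_mul_rrH {q : ℂ} (hq0 : q ≠ 0) (hq : ‖q‖ < 1) :
    qPInf q q * rrH q
      = qPInf q (q ^ 5) * qPInf (q ^ 4) (q ^ 5) * qPInf (q ^ 5) (q ^ 5) := by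
  have hα : Summable fun s => pentW q s * q ^ s :=
    ((Equiv.neg ℤ).summable_iff.mpr (summable_pentW hq0 hq)).congr fun s => pentW_neg hq0 s
  have hbailey := bailey_limit hq0 hq 1 hα (β := invQP q) fun r => by
    rw [invQP_eq_tsum_pentW hq0 hq r, tsum_pentW_eq_tsum_add_one hq0 hq]
    simp only [add_right_comm r 1]
  have hdiv : q ^ 5 / q ^ 4 = q := by field_simp
  have hjacobi := jacobi_triple_product (pow_ne_zero 4 hq0) (pow_ne_zero 5 hq0)
    (norm_pow_lt_one hq (by norm_num)) (by rwa [hdiv])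
  simp only [one_mul] at hbailey
  rw [hdiv, mul_comm (qPInf (q ^ 4) _)] at hjacobi
  rw [rrH, hbailey, ← hjacobi]
  refine tsum_congr fun s => ?_
  rw [pentW, neg_eq_neg_one_mul (q ^ 4), mul_zpow, mul_assoc, mul_left_comm, mul_assoc,
    ← zpow_natCast q 4, ← zpow_natCast q 5, ← zpow_mul, ← zpow_mul, ← zpow_add₀ hq0,
    ← zpow_add₀ hq0, ← zpow_add₀ hq0]
  congr 2
  push_cast
  linarith [two_mul_tri s]

/-! ### Rogers–Szegő polynomials -/

/-- The homogeneous Rogers–Szegő polynomial of degree `N` in `a` and `b`, divided by `(q;q)_N`. -/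
noncomputable def rogersSzego (q a b : ℂ) (N : ℤ) : ℂ :=
  ∑' m : ℤ, a ^ m * b ^ (N - m) * (invQP q m * invQP q (N - m))

theorem summable_mul_invQP_mul_invQP_sub (q : ℂ) (g : ℤ → ℂ) (N : ℤ) :
    Summable fun m : ℤ => g m * (invQP q m * invQP q (N - m)) := by
  simpa only [zero_add] using summable_mul_invQP_add_mul_invQP_sub q g 0 N

theorem rogersSzego_of_neg (q a b : ℂ) {N : ℤ} (hN : N < 0) : rogersSzego q a b N = 0 :=
  (tsum_congr fun _ => mul_eq_zero_of_right _ (invQP_mul_invQP_eq_zero q (by lia))).trans tsum_zero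

theorem rogersSzego_zero (q a b : ℂ) : rogersSzego q a b 0 = 1 := by
  rw [rogersSzego, tsum_eq_single 0 fun m hm =>
    mul_eq_zero_of_right _ (invQP_mul_invQP_eq_zero q (by lia))]
  simp [invQP_zero]

theorem one_sub_zpow_mul_rogersSzego {q a b : ℂ} (hq0 : q ≠ 0) (hq : ‖q‖ < 1) (ha : a ≠ 0)
    (hb : b ≠ 0) (N : ℤ) :
    (1 - q ^ N) * rogersSzego q a b N
      = (a + b) * rogersSzego q a b (N - 1) - a * b * rogersSzego q a b (N - 2) := by
  have hS := summable_mul_invQP_mul_invQP_sub q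
  have hb1 : ∑' m : ℤ, a ^ m * b ^ (N - m) * (invQP q m * invQP q (N - 1 - m))
      = b * rogersSzego q a b (N - 1) := by
    rw [rogersSzego, ← tsum_mul_left]
    refine tsum_congr fun m => ?_
    rw [sub_right_comm, zpow_sub_one₀ hb]
    field_simp
  have ha1 : ∑' m : ℤ, a ^ m * b ^ (N - m) * q ^ (N - m) * (invQP q (m - 1) * invQP q (N - m))
      = a * rogersSzego q a b (N - 1) - a * b * rogersSzego q a b (N - 2) := by
    rw [rogersSzego, rogersSzego, ← tsum_mul_left, ← tsum_mul_left,
      ← ((hS _ _).mul_left _).tsum_sub ((hS _ _).mul_left _), ← tsum_add_right _ (1 : ℤ)]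
    refine tsum_congr fun m => ?_
    rw [show N - 2 - m = N - 1 - m - 1 by ring, ← one_sub_zpow_mul_invQP hq (N - 1 - m),
      add_sub_cancel_right, sub_add_eq_sub_sub_swap, zpow_add_one₀ ha, zpow_sub_one₀ hb]
    field_simp
    ring
  have hsplit : ∀ m : ℤ, (1 - q ^ N) * (a ^ m * b ^ (N - m) * (invQP q m * invQP q (N - m)))
      = a ^ m * b ^ (N - m) * (invQP q m * invQP q (N - 1 - m))
        + a ^ m * b ^ (N - m) * q ^ (N - m) * (invQP q (m - 1) * invQP q (N - m)) := fun m => by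
    have hqN : q ^ N = q ^ m * q ^ (N - m) := by rw [← zpow_add₀ hq0, add_sub_cancel]
    rw [← one_sub_zpow_mul_invQP hq m, sub_right_comm, ← one_sub_zpow_mul_invQP hq (N - m), hqN]
    ring
  have hS1 : Summable fun m : ℤ =>
      a ^ m * b ^ (N - m) * q ^ (N - m) * (invQP q (m - 1) * invQP q (N - m)) := by
    refine (summable_mul_invQP_add_mul_invQP_sub q
      (fun m => a ^ m * b ^ (N - m) * q ^ (N - m)) (-1) N).congr fun m => ?_
    rw [neg_add_eq_sub]
  rw [rogersSzego, ← tsum_mul_left, tsum_congr hsplit, (hS _ _).tsum_add hS1, hb1, ha1]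
  ring

theorem rogersSzego_eq_of_forall {q a b : ℂ} (hq0 : q ≠ 0) (hq : ‖q‖ < 1) (ha : a ≠ 0)
    (hb : b ≠ 0) {u : ℤ → ℂ} (hneg : ∀ N < 0, u N = 0) (h0 : u 0 = 1)
    (hu : ∀ N, (1 - q ^ N) * u N = (a + b) * u (N - 1) - a * b * u (N - 2)) (N : ℤ) :
    rogersSzego q a b N = u N := by
  suffices ∀ n : ℕ, ∀ M < (n : ℤ), rogersSzego q a b M = u M from this (N + 1).toNat N (by lia)
  intro n
  induction n with
  | zero => exact fun M hM => (rogersSzego_of_neg q a b hM).trans (hneg M hM).symm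
  | succ n ih =>
    intro M hM
    rcases (show M < n ∨ M = n by lia) with hlt | rfl
    · exact ih M hlt
    rcases eq_or_ne n 0 with rfl | hn
    · rw [Nat.cast_zero, rogersSzego_zero, h0]
    · refine mul_left_cancel₀ (one_sub_zpow_ne_zero hq (Nat.cast_ne_zero.mpr hn)) ?_
      rw [one_sub_zpow_mul_rogersSzego hq0 hq ha hb, hu, ih _ (by lia), ih _ (by lia)]

theorem rogersSzego_sq_eq_zpow_mul_invQP {p a b c : ℂ} (hp0 : p ≠ 0) (hp : ‖p‖ < 1) (hc : c ≠ 0)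
    (hadd : a + b = c * (1 + p)) (hmul : a * b = c ^ 2 * p) (N : ℤ) :
    rogersSzego (p ^ 2) a b N = c ^ N * invQP p N := by
  have hab : a * b ≠ 0 := hmul ▸ mul_ne_zero (pow_ne_zero 2 hc) hp0
  refine rogersSzego_eq_of_forall (pow_ne_zero 2 hp0) (norm_pow_lt_one hp two_ne_zero)
    (left_ne_zero_of_mul hab) (right_ne_zero_of_mul hab) (u := fun N => c ^ N * invQP p N)
    (fun N hN => by rw [invQP_of_neg p hN, mul_zero]) (by simp [invQP_zero]) (fun N => ?_) N
  have h1 := one_sub_zpow_mul_invQP hp N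
  have h2 := one_sub_zpow_mul_invQP hp (N - 1)
  rw [sub_sub, one_add_one_eq_two] at h2
  have hsq : (p ^ 2) ^ N = p ^ N * p ^ N := by rw [sq, mul_zpow]
  rw [← h2, ← h1, hadd, hmul, hsq, zpow_sub_one₀ hp0, zpow_sub_one₀ hc, zpow_sub₀ hc]
  norm_cast
  field_simp
  ring

theorem rogersSzego_neg {q c : ℂ} (hq0 : q ≠ 0) (hq : ‖q‖ < 1) (hc : c ≠ 0) (N : ℤ) :
    rogersSzego q c (-c) N = if Even N then c ^ N * invQP (q ^ 2) (N / 2) else 0 := by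
  refine rogersSzego_eq_of_forall hq0 hq hc (neg_ne_zero.mpr hc)
    (u := fun N => if Even N then c ^ N * invQP (q ^ 2) (N / 2) else 0)
    (fun N hN => ?_) (by simp [invQP_zero]) (fun N => ?_) N
  · rw [invQP_of_neg _ (by lia), mul_zero, ite_self]
  · have hparity : Even (N - 2) ↔ Even N := by simp
    simp only [hparity, add_neg_cancel, zero_mul, zero_sub]
    split_ifs with hN
    · obtain ⟨n, rfl⟩ := hN
      have hstep := one_sub_zpow_mul_invQP (norm_pow_lt_one hq two_ne_zero) n
      have hqn : (q ^ 2) ^ n = q ^ (n + n) := by rw [sq, mul_zpow, zpow_add₀ hq0]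
      rw [show (n + n) / 2 = n by lia, show (n + n - 2) / 2 = n - 1 by lia, ← hstep, hqn,
        zpow_sub₀ hc]
      norm_cast
      field_simp
    · ring

theorem summable_zpow_add_sq_mul {q a b : ℂ} (hq0 : q ≠ 0) (hq : ‖q‖ < 1) (ha : a ≠ 0)
    (hb : b ≠ 0) {p : ℂ} (hp : ‖p‖ < 1) : Summable fun x : ℤ × ℤ =>
      q ^ ((x.1 + x.2) ^ 2) * (a ^ x.1 * b ^ x.2 * (invQP p x.1 * invQP p x.2)) := by
  have hs := summable_mul_invQP hp (summable_mul_invQP hp (summable_mul_prod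
    (summable_zpow_mul_zpow_sq ha hq0 hq) (summable_zpow_mul_zpow_sq hb hq0 hq)) Prod.fst) Prod.snd
  refine summable_of_norm_le_mul 1 hs ?_
  rintro ⟨n, m⟩
  rcases lt_or_ge n 0 with hn | hn
  · simp [invQP_of_neg p hn]
  rcases lt_or_ge m 0 with hm | hm
  · simp [invQP_of_neg p hm]
  have hpow : ‖q ^ ((n + m) ^ 2)‖ ≤ ‖q ^ (n ^ 2)‖ * ‖q ^ (m ^ 2)‖ := by
    rw [← norm_mul, ← zpow_add₀ hq0, norm_zpow, norm_zpow]
    exact zpow_le_zpow_right_of_le_one₀ (norm_pos_iff.mpr hq0) hq.le (by nlinarith)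
  calc ‖q ^ ((n + m) ^ 2) * (a ^ n * b ^ m * (invQP p n * invQP p m))‖
      ≤ ‖q ^ (n ^ 2)‖ * ‖q ^ (m ^ 2)‖ * ‖a ^ n * b ^ m * (invQP p n * invQP p m)‖ := by
        rw [norm_mul]
        gcongr
    _ = 1 * ‖a ^ n * q ^ (n ^ 2) * (b ^ m * q ^ (m ^ 2)) * invQP p n * invQP p m‖ := by
        simp only [norm_mul]
        ring

theorem tsum_zpow_mul_qPInf_eq_tsum_rogersSzego {q a b : ℂ} (hq0 : q ≠ 0) (hq : ‖q‖ < 1)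
    (ha : a ≠ 0) (hb : b ≠ 0) :
    ∑' n : ℤ, a ^ n * q ^ (n ^ 2) *
        (invQP (q ^ 2) n * qPInf (-(b * q ^ (2 * n + 1))) (q ^ 2))
      = ∑' N : ℤ, q ^ (N ^ 2) * rogersSzego (q ^ 2) a b N := by
  have hexpand : ∀ n : ℤ, a ^ n * q ^ (n ^ 2) *
        (invQP (q ^ 2) n * qPInf (-(b * q ^ (2 * n + 1))) (q ^ 2))
      = ∑' m : ℤ, q ^ ((n + m) ^ 2) *
        (a ^ n * b ^ m * (invQP (q ^ 2) n * invQP (q ^ 2) m)) := fun n => by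
    rw [← tsum_zpow_mul_zpow_tri_mul_invQP (neg_ne_zero.mpr (mul_ne_zero hb (zpow_ne_zero _ hq0)))
      (pow_ne_zero 2 hq0) (norm_pow_lt_one hq two_ne_zero), ← tsum_mul_left, ← tsum_mul_left]
    refine tsum_congr fun m => ?_
    rw [neg_neg, mul_zpow, sq_zpow_tri, ← zpow_mul,
      show (n + m) ^ 2 = n ^ 2 + ((2 * n + 1) * m + (m ^ 2 - m)) by ring,
      zpow_add₀ hq0 (n ^ 2), zpow_add₀ hq0 (_ * m)]
    ring
  have hF := summable_zpow_add_sq_mul hq0 hq ha hb (norm_pow_lt_one hq two_ne_zero)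
  rw [tsum_congr hexpand, tsum_tsum_eq_tsum_tsum_sub (F := fun n m => q ^ ((n + m) ^ 2) *
    (a ^ n * b ^ m * (invQP (q ^ 2) n * invQP (q ^ 2) m))) hF]
  refine tsum_congr fun N => ?_
  simp only [rogersSzego, add_sub_cancel, tsum_mul_left]

/-! ### Even and odd parts of bilateral sums -/

theorem injective_two_mul : Function.Injective fun n : ℤ => 2 * n := fun a b h => by
  simpa using h

theorem injective_two_mul_add_one : Function.Injective fun n : ℤ => 2 * n + 1 := fun a b h => by
  simpa using h

theorem isCompl_range_two_mul :
    IsCompl (range fun n : ℤ => 2 * n) (range fun n : ℤ => 2 * n + 1) := by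
  have heven : (range fun n : ℤ => 2 * n) = {n | Even n} := by
    ext n
    simp only [mem_range, mem_ofPred_eq, even_iff_exists_two_mul, eq_comm]
  have hodd : (range fun n : ℤ => 2 * n + 1) = {n | Odd n} := by
    ext n
    simp only [mem_range, mem_ofPred_eq, Odd, eq_comm]
  rw [heven, hodd]
  exact Int.isCompl_even_odd

theorem tsum_even_add_odd {E : Type*} [NormedAddCommGroup E] [CompleteSpace E] {f : ℤ → E}
    (hf : Summable f) : ∑' n, f n = ∑' n : ℤ, f (2 * n) + ∑' n : ℤ, f (2 * n + 1) :=
  (HasSum.add_isCompl isCompl_range_two_mul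
    (injective_two_mul.hasSum_range_iff.mpr (hf.comp_injective injective_two_mul).hasSum)
    (injective_two_mul_add_one.hasSum_range_iff.mpr
      (hf.comp_injective injective_two_mul_add_one).hasSum)).tsum_eq

theorem tsum_eq_tsum_even {E : Type*} [AddCommMonoid E] [TopologicalSpace E] {f : ℤ → E}
    (hf : ∀ n, ¬Even n → f n = 0) : ∑' n, f n = ∑' n : ℤ, f (2 * n) := by
  refine (injective_two_mul.tsum_eq fun n hn => ?_).symm
  obtain ⟨k, rfl⟩ := (not_imp_comm.mp (hf n) hn).exists_two_nsmul
  exact ⟨k, by simp⟩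

/-! ### Quadratic sums as Rogers–Ramanujan functions -/

section Evaluation

variable {q : ℂ} (hq0 : q ≠ 0) (hq : ‖q‖ < 1)
include hq0 hq

theorem qPInf_mul_invQP_two_mul (n : ℤ) : qPInf q (q ^ 2) * invQP q (2 * n)
    = invQP (q ^ 2) n * qPInf (q ^ (2 * n + 1)) (q ^ 2) := by
  have h2 : ‖q ^ 2‖ < 1 := norm_pow_lt_one hq two_ne_zero
  have hn := invQP_mul_qPInf (pow_ne_zero 2 hq0) h2 n
  have h2n := invQP_mul_qPInf hq0 hq (2 * n)
  have hpow : (q ^ 2) ^ (n + 1) = q ^ (2 * n + 1) * q := by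
    rw [← zpow_add_one₀ hq0, ← zpow_natCast, ← zpow_mul]
    congr 1
    push_cast
    ring
  rw [← qPInf_self_sq_mul hq, ← qPInf_sq_mul_qPInf_mul_sq _ hq, ← hpow] at h2n
  refine mul_right_cancel₀ (qPInf_ne_zero h2 h2) ?_
  linear_combination h2n - qPInf (q ^ (2 * n + 1)) (q ^ 2) * hn

theorem qPInf_mul_invQP_two_mul_add_one (n : ℤ) : qPInf q (q ^ 2) * invQP q (2 * n + 1)
    = invQP (q ^ 2) n * qPInf (q ^ 2 * q ^ (2 * n + 1)) (q ^ 2) := by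
  have h2 : ‖q ^ 2‖ < 1 := norm_pow_lt_one hq two_ne_zero
  have hn := invQP_mul_qPInf (pow_ne_zero 2 hq0) h2 n
  have h2n := invQP_mul_qPInf hq0 hq (2 * n + 1)
  have hpow : q ^ (2 * n + 1 + 1) = (q ^ 2) ^ (n + 1) := by
    rw [← zpow_natCast q, ← zpow_mul]
    congr 1
    push_cast
    ring
  have hpow' : (q ^ 2) ^ (n + 1) * q = q ^ 2 * q ^ (2 * n + 1) := by
    rw [← hpow, zpow_add_one₀ hq0]
    ring
  rw [← qPInf_self_sq_mul hq, ← qPInf_sq_mul_qPInf_mul_sq _ hq, hpow, hpow'] at h2n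
  refine mul_right_cancel₀ (qPInf_ne_zero h2 h2) ?_
  linear_combination h2n - qPInf (q ^ 2 * q ^ (2 * n + 1)) (q ^ 2) * hn

theorem qPInf_neg_mul_invQP_sq (n : ℤ) :
    qPInf (-q) q * invQP (q ^ 2) n = invQP q n * qPInf (-q ^ (n + 1)) q := by
  have hn := invQP_mul_qPInf hq0 hq n
  have hsq := invQP_mul_qPInf (pow_ne_zero 2 hq0) (norm_pow_lt_one hq two_ne_zero) n
  have hpow : (q ^ 2) ^ (n + 1) = (q ^ (n + 1)) ^ 2 := by rw [sq, mul_zpow, sq]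
  rw [← qPInf_mul_qPInf_neg q hq, hpow, ← qPInf_mul_qPInf_neg _ hq] at hsq
  refine mul_right_cancel₀ (qPInf_ne_zero hq hq) ?_
  linear_combination hsq - qPInf (-q ^ (n + 1)) q * hn

section Parameter

variable {a : ℂ} (ha : a ≠ 0)
include ha

theorem qPInf_mul_tsum_invQP_two_mul :
    qPInf q (q ^ 2) * ∑' n : ℤ, a ^ n * q ^ (n ^ 2) * invQP q (2 * n)
      = ∑' N : ℤ, q ^ (N ^ 2) * rogersSzego (q ^ 2) a (-1) N := by
  rw [← tsum_zpow_mul_qPInf_eq_tsum_rogersSzego hq0 hq ha (neg_ne_zero.mpr one_ne_zero),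
    ← tsum_mul_left]
  refine tsum_congr fun n => ?_
  rw [neg_one_mul, neg_neg, ← qPInf_mul_invQP_two_mul hq0 hq]
  ring

theorem qPInf_mul_tsum_invQP_two_mul_add_one :
    qPInf q (q ^ 2) * ∑' n : ℤ, a ^ n * q ^ (n ^ 2) * invQP q (2 * n + 1)
      = ∑' N : ℤ, q ^ (N ^ 2) * rogersSzego (q ^ 2) a (-q ^ 2) N := by
  rw [← tsum_zpow_mul_qPInf_eq_tsum_rogersSzego hq0 hq ha (neg_ne_zero.mpr (pow_ne_zero 2 hq0)),
    ← tsum_mul_left]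
  refine tsum_congr fun n => ?_
  rw [neg_mul, neg_neg, ← qPInf_mul_invQP_two_mul_add_one hq0 hq]
  ring

theorem qPInf_mul_tsum_invQP_pow_four :
    qPInf (-q ^ 2) (q ^ 2) * ∑' n : ℤ, a ^ n * q ^ (n ^ 2) * invQP (q ^ 4) n
      = ∑' N : ℤ, q ^ (N ^ 2) * rogersSzego (q ^ 2) a q N := by
  rw [← tsum_zpow_mul_qPInf_eq_tsum_rogersSzego hq0 hq ha hq0, ← tsum_mul_left]
  refine tsum_congr fun n => ?_
  have hn := qPInf_neg_mul_invQP_sq (pow_ne_zero 2 hq0) (norm_pow_lt_one hq two_ne_zero) n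
  have hpow : (q ^ 2) ^ (n + 1) = q * q ^ (2 * n + 1) := by
    rw [← zpow_one_add₀ hq0, ← zpow_natCast, ← zpow_mul]
    congr 1
    push_cast
    ring
  rw [← pow_mul, hpow] at hn
  linear_combination a ^ n * q ^ (n ^ 2) * hn

/-- Only even degrees contribute, which is what raises the nome from `q` to `q⁴`. -/
theorem tsum_rogersSzego_neg : ∑' N : ℤ, q ^ (N ^ 2) * rogersSzego (q ^ 2) a (-a) N
    = ∑' n : ℤ, (a ^ 2) ^ n * (q ^ 4) ^ (n ^ 2) * invQP (q ^ 4) n := by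
  have hRS := rogersSzego_neg (pow_ne_zero 2 hq0) (norm_pow_lt_one hq two_ne_zero) ha
  rw [tsum_eq_tsum_even fun N hN => by rw [hRS, if_neg hN, mul_zero]]
  refine tsum_congr fun n => ?_
  rw [hRS, if_pos (even_two_mul n), Int.mul_ediv_cancel_left _ two_ne_zero, ← pow_mul,
    ← zpow_natCast a, ← zpow_natCast q 4, ← zpow_mul, ← zpow_mul]
  push_cast
  rw [show (2 * n) ^ 2 = 4 * n ^ 2 by ring]
  ring

end Parameter

theorem qPInf_mul_tsum_sq_add_invQP_two_mul :
    qPInf q (q ^ 2) * ∑' n : ℤ, q ^ (n ^ 2 + n) * invQP q (2 * n) = rrG (-q) := by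
  have hRS : ∀ N, rogersSzego (q ^ 2) q (-1) N = (-1) ^ N * invQP (-q) N := by
    simpa only [neg_sq] using rogersSzego_sq_eq_zpow_mul_invQP (p := -q) (a := q) (b := -1)
      (c := -1) (neg_ne_zero.mpr hq0) (by rwa [norm_neg]) (by simp) (by ring) (by ring)
  have h := qPInf_mul_tsum_invQP_two_mul hq0 hq hq0
  simp only [hRS, ← zpow_add₀ hq0, add_comm _ (_ ^ 2)] at h
  rw [h, rrG]
  refine tsum_congr fun N => ?_
  have hparity : (-1 : ℂ) ^ (N ^ 2) = (-1) ^ N := by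
    rcases Int.even_or_odd N with hN | hN
    · rw [hN.neg_one_zpow, (hN.pow_of_ne_zero two_ne_zero).neg_one_zpow]
    · rw [hN.neg_one_zpow, hN.pow.neg_one_zpow]
  rw [neg_eq_neg_one_mul q, mul_zpow, hparity]
  ring

theorem qPInf_mul_tsum_add_one_sq_invQP_two_mul_add_one :
    qPInf q (q ^ 2) * ∑' n : ℤ, q ^ ((n + 1) ^ 2) * invQP q (2 * n + 1) = q * rrH (q ^ 4) := by
  have hq2 := pow_ne_zero 2 hq0
  have h := qPInf_mul_tsum_invQP_two_mul_add_one hq0 hq hq2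
  rw [tsum_rogersSzego_neg hq0 hq hq2] at h
  have hpow : ∀ n : ℤ, q ^ ((n + 1) ^ 2) = q * ((q ^ 2) ^ n * q ^ (n ^ 2)) := fun n => by
    rw [show (n + 1) ^ 2 = 1 + (n + n + n ^ 2) by ring, zpow_one_add₀ hq0, zpow_add₀ hq0,
      zpow_add₀ hq0, sq q, mul_zpow]
  simp_rw [hpow, mul_assoc q, tsum_mul_left]
  rw [mul_left_comm, h, rrH, ← pow_mul]
  refine congrArg _ (tsum_congr fun n => ?_)
  rw [← zpow_add₀ (pow_ne_zero 4 hq0), add_comm]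

theorem qPInf_mul_tsum_sq_invQP_two_mul :
    qPInf q (q ^ 2) * ∑' n : ℤ, q ^ (n ^ 2) * invQP q (2 * n) = rrG (q ^ 4) := by
  simpa only [one_zpow, one_mul, one_pow, tsum_rogersSzego_neg hq0 hq one_ne_zero, rrG]
    using qPInf_mul_tsum_invQP_two_mul hq0 hq one_ne_zero

theorem qPInf_mul_tsum_sq_add_invQP_two_mul_add_one :
    qPInf q (q ^ 2) * ∑' n : ℤ, q ^ (n ^ 2 + n) * invQP q (2 * n + 1) = rrH (-q) := by
  have hRS : ∀ N, rogersSzego (q ^ 2) q (-q ^ 2) N = q ^ N * invQP (-q) N := by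
    simpa only [neg_sq] using rogersSzego_sq_eq_zpow_mul_invQP (p := -q) (a := q) (b := -q ^ 2)
      (c := q) (neg_ne_zero.mpr hq0) (by rwa [norm_neg]) hq0 (by ring) (by ring)
  have h := qPInf_mul_tsum_invQP_two_mul_add_one hq0 hq hq0
  simp only [hRS, ← mul_assoc, ← zpow_add₀ hq0, add_comm _ (_ ^ 2)] at h
  rw [h, rrH]
  refine tsum_congr fun N => ?_
  have hparity : Even (N ^ 2 + N) := by
    rw [sq, ← mul_add_one]
    exact Int.even_mul_succ_self N
  rw [hparity.neg_zpow]

theorem qPInf_mul_tsum_sq_invQP_pow_four :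
    qPInf (-q ^ 2) (q ^ 2) * ∑' n : ℤ, q ^ (n ^ 2) * invQP (q ^ 4) n = rrG q := by
  have hRS := rogersSzego_sq_eq_zpow_mul_invQP hq0 hq one_ne_zero (a := 1) (b := q) (by ring)
    (by ring)
  simpa only [hRS, one_zpow, one_mul, rrG] using qPInf_mul_tsum_invQP_pow_four hq0 hq one_ne_zero

theorem qPInf_mul_tsum_sq_add_two_mul_invQP_pow_four :
    qPInf (-q ^ 2) (q ^ 2) * ∑' n : ℤ, q ^ (n ^ 2 + 2 * n) * invQP (q ^ 4) n = rrH q := by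
  have hRS := rogersSzego_sq_eq_zpow_mul_invQP hq0 hq hq0 (a := q ^ 2) (b := q) (by ring)
    (by ring)
  have hpow : ∀ n : ℤ, q ^ (n ^ 2 + 2 * n) = (q ^ 2) ^ n * q ^ (n ^ 2) := fun n => by
    rw [zpow_add₀ hq0, zpow_mul, mul_comm]
    norm_cast
  simp only [hpow]
  rw [qPInf_mul_tsum_invQP_pow_four hq0 hq (pow_ne_zero 2 hq0), rrH]
  refine tsum_congr fun N => ?_
  rw [hRS, zpow_add₀ hq0, mul_assoc]

end Evaluation

/-! ### Quartic dissections -/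

/-- The common factor `(-q²;q²)_∞ (-q⁴;q⁴)_∞` in the quartic dissections of `rrG`, `rrH` and
`theta2`. -/
noncomputable def dissectionFactor (q : ℂ) : ℂ :=
  qPInf (-q ^ 2) (q ^ 2) * qPInf (-q ^ 4) (q ^ 4)

theorem zpow_two_mul_sq (q : ℂ) (n : ℤ) : q ^ ((2 * n) ^ 2) = (q ^ 4) ^ (n ^ 2) := by
  rw [mul_pow, zpow_mul]
  norm_cast

section Dissection

variable {q : ℂ} (hq0 : q ≠ 0) (hq : ‖q‖ < 1)
include hq0

theorem zpow_two_mul_add_one_sq (n : ℤ) :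
    q ^ ((2 * n + 1) ^ 2) = q * (q ^ 4) ^ (n ^ 2 + n) := by
  rw [show (2 * n + 1) ^ 2 = 1 + 4 * (n ^ 2 + n) by ring, zpow_one_add₀ hq0, zpow_mul]
  norm_cast

include hq

theorem rrG_eq_dissectionFactor_mul : rrG q
    = dissectionFactor q * (rrG ((q ^ 4) ^ 4) + q * rrH (-q ^ 4)) := by
  have h40 := pow_ne_zero 4 hq0
  have h4 := norm_pow_lt_one hq four_ne_zero
  have hsum := summable_mul_invQP h4 (by simpa using summable_zpow_sq_add_mul hq0 hq 0) id
  have hO := qPInf_self_sq_mul_qPInf_neg h4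
  have hsplit : ∑' n : ℤ, q ^ (n ^ 2) * invQP (q ^ 4) n
      = ∑' n : ℤ, (q ^ 4) ^ (n ^ 2) * invQP (q ^ 4) (2 * n)
        + q * ∑' n : ℤ, (q ^ 4) ^ (n ^ 2 + n) * invQP (q ^ 4) (2 * n + 1) := by
    simp only [← tsum_mul_left, ← mul_assoc q, ← zpow_two_mul_sq, ← zpow_two_mul_add_one_sq hq0]
    exact tsum_even_add_odd hsum
  rw [dissectionFactor, ← qPInf_mul_tsum_sq_invQP_pow_four hq0 hq, hsplit,
    ← qPInf_mul_tsum_sq_invQP_two_mul h40 h4,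
    ← qPInf_mul_tsum_sq_add_invQP_two_mul_add_one h40 h4]
  linear_combination (-qPInf (-q ^ 2) (q ^ 2) *
    (∑' n : ℤ, (q ^ 4) ^ (n ^ 2) * invQP (q ^ 4) (2 * n)
      + q * ∑' n : ℤ, (q ^ 4) ^ (n ^ 2 + n) * invQP (q ^ 4) (2 * n + 1))) * hO

theorem rrH_eq_dissectionFactor_mul : rrH q
    = dissectionFactor q * (rrG (-q ^ 4) + q ^ 3 * rrH ((q ^ 4) ^ 4)) := by
  have h40 := pow_ne_zero 4 hq0
  have h4 := norm_pow_lt_one hq four_ne_zero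
  have hsum := summable_mul_invQP h4 (summable_zpow_sq_add_mul hq0 hq 2) id
  have hO := qPInf_self_sq_mul_qPInf_neg h4
  have hH := qPInf_mul_tsum_add_one_sq_invQP_two_mul_add_one h40 h4
  have heven : ∀ n : ℤ, q ^ ((2 * n) ^ 2 + 2 * (2 * n)) = (q ^ 4) ^ (n ^ 2 + n) := fun n => by
    rw [show (2 * n) ^ 2 + 2 * (2 * n) = 4 * (n ^ 2 + n) by ring, zpow_mul]
    norm_cast
  have hodd : ∀ n : ℤ, q ^ ((2 * n + 1) ^ 2 + 2 * (2 * n + 1)) = q⁻¹ * (q ^ 4) ^ ((n + 1) ^ 2) :=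
    fun n => by
      rw [show (2 * n + 1) ^ 2 + 2 * (2 * n + 1) = -1 + 4 * (n + 1) ^ 2 by ring,
        zpow_add₀ hq0, zpow_neg_one, zpow_mul]
      norm_cast
  have hsplit : ∑' n : ℤ, q ^ (n ^ 2 + 2 * n) * invQP (q ^ 4) n
      = ∑' n : ℤ, (q ^ 4) ^ (n ^ 2 + n) * invQP (q ^ 4) (2 * n)
        + q⁻¹ * ∑' n : ℤ, (q ^ 4) ^ ((n + 1) ^ 2) * invQP (q ^ 4) (2 * n + 1) := by
    simp only [← tsum_mul_left, ← mul_assoc q⁻¹, ← heven, ← hodd]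
    exact tsum_even_add_odd hsum
  rw [dissectionFactor, ← qPInf_mul_tsum_sq_add_two_mul_invQP_pow_four hq0 hq, hsplit,
    ← qPInf_mul_tsum_sq_add_invQP_two_mul h40 h4]
  set A := ∑' n : ℤ, (q ^ 4) ^ (n ^ 2 + n) * invQP (q ^ 4) (2 * n)
  set B := ∑' n : ℤ, (q ^ 4) ^ ((n + 1) ^ 2) * invQP (q ^ 4) (2 * n + 1)
  have hq1 : q⁻¹ * q = 1 := inv_mul_cancel₀ hq0
  linear_combination (-qPInf (-q ^ 2) (q ^ 2) * (A + q⁻¹ * B)) * hO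
    + qPInf (-q ^ 2) (q ^ 2) * qPInf (-q ^ 4) (q ^ 4) * q⁻¹ * hH
    + qPInf (-q ^ 2) (q ^ 2) * qPInf (-q ^ 4) (q ^ 4) * q ^ 3 * rrH ((q ^ 4) ^ 4) * hq1

end Dissection

/-! ### Theta functions -/

/-- Jacobi's theta constant `ϑ₃`, as a series in the nome. -/
noncomputable def theta3 (q : ℂ) : ℂ := ∑' n : ℤ, q ^ (n ^ 2)

/-- Jacobi's theta constant `ϑ₂`, as a series in the nome without its factor `q^{1/4}`. -/
noncomputable def theta2 (q : ℂ) : ℂ := ∑' n : ℤ, q ^ (n ^ 2 + n)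

section Theta

variable {q : ℂ} (hq0 : q ≠ 0) (hq : ‖q‖ < 1)
include hq0 hq

theorem theta3_eq_add_mul_theta2 : theta3 q = theta3 (q ^ 4) + q * theta2 (q ^ 4) := by
  have hsum : Summable fun n : ℤ => q ^ (n ^ 2) := by
    simpa using summable_zpow_sq_add_mul hq0 hq 0
  rw [theta3, tsum_even_add_odd hsum, theta3, theta2, ← tsum_mul_left]
  simp only [zpow_two_mul_sq, zpow_two_mul_add_one_sq hq0]

theorem theta3_neg : theta3 (-q) = qPInf q (q ^ 2) ^ 2 * qPInf (q ^ 2) (q ^ 2) := by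
  have hdiv : q ^ 2 / q = q := by field_simp
  have h := jacobi_triple_product hq0 (pow_ne_zero 2 hq0) (norm_pow_lt_one hq two_ne_zero)
    (by rwa [hdiv])
  rw [hdiv] at h
  rw [sq (qPInf q _), ← h, theta3]
  refine tsum_congr fun n => ?_
  have hparity : Even (n ^ 2 - n) := by
    rw [sq, ← mul_sub_one]
    exact Int.even_mul_pred_self n
  rw [sq_zpow_tri, ← hparity.neg_zpow, ← zpow_add₀ (neg_ne_zero.mpr hq0), add_sub_cancel]

theorem theta2_eq : theta2 q = 2 * qPInf (-q ^ 2) (q ^ 2) ^ 2 * qPInf (q ^ 2) (q ^ 2) := by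
  have h2 := norm_pow_lt_one hq two_ne_zero
  have h := jacobi_triple_product (neg_ne_zero.mpr one_ne_zero) (pow_ne_zero 2 hq0) h2
    (by rwa [div_neg, div_one, norm_neg])
  rw [div_neg, div_one, qPInf_eq_one_sub_mul (-1) h2, ← tsum_add_right _ 1, neg_one_mul] at h
  have hterm : ∀ n : ℤ, q ^ (n ^ 2 + n) = (- -1) ^ (n + 1) * (q ^ 2) ^ tri (n + 1) := fun n => by
    rw [neg_neg, one_zpow, one_mul, sq_zpow_tri]
    congr 1
    ring
  simp_rw [theta2, hterm, h]
  ring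

theorem theta2_eq_dissectionFactor_mul :
    theta2 q = 2 * dissectionFactor q * theta3 (-q ^ 4) := by
  have h4 := norm_pow_lt_one hq four_ne_zero
  have hO := qPInf_self_sq_mul_qPInf_neg h4
  have hE := qPInf_self_sq_mul h4
  have hN := qPInf_mul_qPInf_neg (q ^ 2) (norm_pow_lt_one hq two_ne_zero)
  rw [← pow_mul] at hN
  rw [theta2_eq hq0 hq, theta3_neg (pow_ne_zero 4 hq0) h4, dissectionFactor]
  linear_combination 2 * qPInf (-q ^ 2) (q ^ 2) * (hN - hE)
    - 2 * qPInf (-q ^ 2) (q ^ 2) * qPInf (q ^ 4) ((q ^ 4) ^ 2)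
      * qPInf ((q ^ 4) ^ 2) ((q ^ 4) ^ 2) * hO

end Theta

/-! ### The theta function identity -/

/-- The difference whose vanishing (`thetaDefectG_eq_zero`) is the theta function identity
needed for the product form of the bilateral series. -/
noncomputable def thetaDefectG (q : ℂ) : ℂ :=
  theta3 q * rrG (-q) - theta3 (-q) * rrG q - q * theta2 q * rrH (q ^ 4)

/-- The companion of `thetaDefectG` under the quartic dissection. -/
noncomputable def thetaDefectH (q : ℂ) : ℂ :=
  theta3 q * rrH (-q) + theta3 (-q) * rrH q - theta2 q * rrG (q ^ 4)

theorem dissectionFactor_neg (q : ℂ) : dissectionFactor (-q) = dissectionFactor q := by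
  simp only [dissectionFactor, even_two.neg_pow, (show Even 4 by decide).neg_pow]

section ThetaDefect

variable {q : ℂ} (hq0 : q ≠ 0) (hq : ‖q‖ < 1)
include hq0 hq

theorem thetaDefectG_eq_mul_thetaDefectH :
    thetaDefectG q = -2 * q * dissectionFactor q * thetaDefectH (q ^ 4) := by
  have hn0 := neg_ne_zero.mpr hq0
  have hn : ‖-q‖ < 1 := by rwa [norm_neg]
  have hpow : (-q) ^ 4 = q ^ 4 := by ring
  rw [thetaDefectG, thetaDefectH, theta3_eq_add_mul_theta2 hn0 hn,
    rrG_eq_dissectionFactor_mul hn0 hn, theta3_eq_add_mul_theta2 hq0 hq,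
    rrG_eq_dissectionFactor_mul hq0 hq, theta2_eq_dissectionFactor_mul hq0 hq,
    dissectionFactor_neg, hpow]
  ring

theorem thetaDefectH_eq_mul_thetaDefectG :
    thetaDefectH q = 2 * dissectionFactor q * thetaDefectG (q ^ 4) := by
  have hn0 := neg_ne_zero.mpr hq0
  have hn : ‖-q‖ < 1 := by rwa [norm_neg]
  have hpow : (-q) ^ 4 = q ^ 4 := by ring
  rw [thetaDefectG, thetaDefectH, theta3_eq_add_mul_theta2 hn0 hn,
    rrH_eq_dissectionFactor_mul hn0 hn, theta3_eq_add_mul_theta2 hq0 hq,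
    rrH_eq_dissectionFactor_mul hq0 hq, theta2_eq_dissectionFactor_mul hq0 hq,
    dissectionFactor_neg, hpow]
  ring

end ThetaDefect

theorem tendsto_qPInf_pow_pow {m n : ℕ} (hm : m ≠ 0) (hn : n ≠ 0) :
    Tendsto (fun q : ℂ => qPInf (q ^ m) (q ^ n)) (𝓝[≠] 0) (𝓝 1) := by
  refine (tendsto_qPInf_one ?_ ?_).mono_left nhdsWithin_le_nhds
  · simpa [hm] using (continuous_pow m).tendsto (0 : ℂ)
  · simpa [hn] using (continuous_pow n).tendsto (0 : ℂ)

theorem tendsto_qPInf_neg_pow_pow {m n : ℕ} (hm : m ≠ 0) (hn : n ≠ 0) :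
    Tendsto (fun q : ℂ => qPInf (-q ^ m) (q ^ n)) (𝓝[≠] 0) (𝓝 1) := by
  refine (tendsto_qPInf_one ?_ ?_).mono_left nhdsWithin_le_nhds
  · simpa [hm] using ((continuous_pow m).tendsto (0 : ℂ)).neg
  · simpa [hn] using (continuous_pow n).tendsto (0 : ℂ)

theorem eventually_ne_zero_and_norm_lt_one : ∀ᶠ q : ℂ in 𝓝[≠] 0, q ≠ 0 ∧ ‖q‖ < 1 := by
  filter_upwards [self_mem_nhdsWithin,
    mem_nhdsWithin_of_mem_nhds (Metric.ball_mem_nhds (0 : ℂ) one_pos)] with q hq0 hq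
  exact ⟨hq0, mem_ball_zero_iff.mp hq⟩

theorem tendsto_neg_nhdsNE_zero : Tendsto (fun q : ℂ => -q) (𝓝[≠] 0) (𝓝[≠] 0) := by
  refine tendsto_nhdsWithin_iff.mpr ⟨?_, ?_⟩
  · simpa using (continuous_neg.tendsto (0 : ℂ)).mono_left nhdsWithin_le_nhds
  · filter_upwards [self_mem_nhdsWithin] with q hq using neg_ne_zero.mpr hq

theorem tendsto_pow_nhdsNE_zero {n : ℕ} (hn : n ≠ 0) :
    Tendsto (fun q : ℂ => q ^ n) (𝓝[≠] 0) (𝓝[≠] 0) := by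
  refine tendsto_nhdsWithin_iff.mpr ⟨?_, ?_⟩
  · simpa [hn] using ((continuous_pow n).tendsto (0 : ℂ)).mono_left nhdsWithin_le_nhds
  · filter_upwards [self_mem_nhdsWithin] with q hq using pow_ne_zero n hq

theorem tendsto_rrG : Tendsto rrG (𝓝[≠] 0) (𝓝 1) := by
  have hlim : Tendsto (fun q : ℂ => qPInf (q ^ 2) (q ^ 5) * qPInf (q ^ 3) (q ^ 5)
      * qPInf (q ^ 5) (q ^ 5) / qPInf (q ^ 1) (q ^ 1)) (𝓝[≠] 0) (𝓝 (1 * 1 * 1 / 1)) :=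
    (((tendsto_qPInf_pow_pow (by simp) (by simp)).mul
      (tendsto_qPInf_pow_pow (by simp) (by simp))).mul
      (tendsto_qPInf_pow_pow (by simp) (by simp))).div
      (tendsto_qPInf_pow_pow (by simp) (by simp)) one_ne_zero
  rw [mul_one, mul_one, div_one] at hlim
  refine hlim.congr' ?_
  filter_upwards [eventually_ne_zero_and_norm_lt_one] with q ⟨hq0, hq⟩
  rw [← qPInf_mul_rrG hq0 hq, pow_one, mul_div_cancel_left₀ _ (qPInf_ne_zero hq hq)]

theorem tendsto_rrH : Tendsto rrH (𝓝[≠] 0) (𝓝 1) := by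
  have hlim : Tendsto (fun q : ℂ => qPInf (q ^ 1) (q ^ 5) * qPInf (q ^ 4) (q ^ 5)
      * qPInf (q ^ 5) (q ^ 5) / qPInf (q ^ 1) (q ^ 1)) (𝓝[≠] 0) (𝓝 (1 * 1 * 1 / 1)) :=
    (((tendsto_qPInf_pow_pow (by simp) (by simp)).mul
      (tendsto_qPInf_pow_pow (by simp) (by simp))).mul
      (tendsto_qPInf_pow_pow (by simp) (by simp))).div
      (tendsto_qPInf_pow_pow (by simp) (by simp)) one_ne_zero
  rw [mul_one, mul_one, div_one] at hlim
  refine hlim.congr' ?_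
  filter_upwards [eventually_ne_zero_and_norm_lt_one] with q ⟨hq0, hq⟩
  rw [pow_one, ← qPInf_mul_rrH hq0 hq, mul_div_cancel_left₀ _ (qPInf_ne_zero hq hq)]

theorem tendsto_theta3 : Tendsto theta3 (𝓝[≠] 0) (𝓝 1) := by
  have hlim : Tendsto (fun q : ℂ => qPInf (q ^ 1) (q ^ 2) ^ 2 * qPInf (q ^ 2) (q ^ 2))
      (𝓝[≠] 0) (𝓝 (1 ^ 2 * 1)) :=
    ((tendsto_qPInf_pow_pow (by simp) (by simp)).pow 2).mul
      (tendsto_qPInf_pow_pow (by simp) (by simp))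
  have hneg : Tendsto (fun q => theta3 (-q)) (𝓝[≠] 0) (𝓝 1) := by
    rw [one_pow, mul_one] at hlim
    refine hlim.congr' ?_
    filter_upwards [eventually_ne_zero_and_norm_lt_one] with q ⟨hq0, hq⟩
    rw [theta3_neg hq0 hq, pow_one]
  simpa only [Function.comp_def, neg_neg] using hneg.comp tendsto_neg_nhdsNE_zero

theorem tendsto_theta2 : Tendsto theta2 (𝓝[≠] 0) (𝓝 2) := by
  have hlim : Tendsto (fun q : ℂ => 2 * qPInf (-q ^ 2) (q ^ 2) ^ 2 * qPInf (q ^ 2) (q ^ 2))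
      (𝓝[≠] 0) (𝓝 (2 * 1 ^ 2 * 1)) :=
    (((tendsto_qPInf_neg_pow_pow (by simp) (by simp)).pow 2).const_mul 2).mul
      (tendsto_qPInf_pow_pow (by simp) (by simp))
  rw [one_pow, mul_one, mul_one] at hlim
  refine hlim.congr' ?_
  filter_upwards [eventually_ne_zero_and_norm_lt_one] with q ⟨hq0, hq⟩
  rw [theta2_eq hq0 hq]

theorem tendsto_dissectionFactor : Tendsto dissectionFactor (𝓝[≠] 0) (𝓝 1) := by
  unfold dissectionFactor
  simpa only [mul_one] using (tendsto_qPInf_neg_pow_pow two_ne_zero two_ne_zero).mul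
    (tendsto_qPInf_neg_pow_pow four_ne_zero four_ne_zero)

theorem tendsto_thetaDefectG : Tendsto thetaDefectG (𝓝[≠] 0) (𝓝 0) := by
  have hid : Tendsto (fun q : ℂ => q) (𝓝[≠] 0) (𝓝 0) := nhdsWithin_le_nhds
  unfold thetaDefectG
  simpa using ((tendsto_theta3.mul (tendsto_rrG.comp tendsto_neg_nhdsNE_zero)).sub
    ((tendsto_theta3.comp tendsto_neg_nhdsNE_zero).mul tendsto_rrG)).sub
    ((hid.mul tendsto_theta2).mul (tendsto_rrH.comp (tendsto_pow_nhdsNE_zero four_ne_zero)))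

theorem eq_zero_of_forall_eq_mul_succ {R : Type*} [NormedRing R] {E a : ℕ → R}
    (hE : Tendsto E atTop (𝓝 0)) (ha : ∀ᶠ n in atTop, ‖a n‖ ≤ 1)
    (h : ∀ n, E n = a n * E (n + 1)) (n : ℕ) : E n = 0 := by
  obtain ⟨N, hN⟩ := eventually_atTop.mp ha
  have hle : ∀ m ≥ N, ∀ k ≥ m, ‖E m‖ ≤ ‖E k‖ := fun m hm k hk => by
    induction k, hk using Nat.le_induction with
    | base => exact le_rfl
    | succ k hk ih =>
      calc ‖E m‖ ≤ ‖a k * E (k + 1)‖ := by rwa [← h]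
        _ ≤ ‖a k‖ * ‖E (k + 1)‖ := norm_mul_le _ _
        _ ≤ ‖E (k + 1)‖ := mul_le_of_le_one_left (norm_nonneg _) (hN k (hm.le.trans hk))
  have hzero : ∀ m ≥ N, E m = 0 := fun m hm => norm_le_zero_iff.mp <|
    ge_of_tendsto (by simpa using hE.norm) (eventually_atTop.mpr ⟨m, hle m hm⟩)
  exact Nat.decreasingInduction (motive := fun k _ => E k = 0)
    (fun k _ ih => by rw [h, ih, mul_zero]) (hzero _ (le_max_right n N)) (le_max_left n N)

theorem thetaDefectG_eq_zero {q : ℂ} (hq0 : q ≠ 0) (hq : ‖q‖ < 1) : thetaDefectG q = 0 := by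
  set x : ℕ → ℂ := fun n => q ^ 16 ^ n with hx
  have hx0 : ∀ n, x n ≠ 0 := fun n => pow_ne_zero _ hq0
  have hx1 : ∀ n, ‖x n‖ < 1 := fun n => norm_pow_lt_one hq (by positivity)
  have hlim : Tendsto x atTop (𝓝[≠] 0) :=
    tendsto_nhdsWithin_iff.mpr ⟨(tendsto_pow_atTop_nhds_zero_of_norm_lt_one hq).comp
      (tendsto_pow_atTop_atTop_of_one_lt (by norm_num)), Eventually.of_forall hx0⟩
  set a : ℂ → ℂ := fun y => -4 * y * dissectionFactor y * dissectionFactor (y ^ 4) with ha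
  have hstep : ∀ n, thetaDefectG (x n) = a (x n) * thetaDefectG (x (n + 1)) := fun n => by
    have hsucc : x (n + 1) = (x n ^ 4) ^ 4 := by
      simp only [hx]
      ring
    rw [hsucc, thetaDefectG_eq_mul_thetaDefectH (hx0 n) (hx1 n), thetaDefectH_eq_mul_thetaDefectG
      (pow_ne_zero 4 (hx0 n)) (norm_pow_lt_one (hx1 n) four_ne_zero)]
    ring
  have halim : Tendsto a (𝓝[≠] 0) (𝓝 0) := by
    have hid : Tendsto (fun y : ℂ => y) (𝓝[≠] 0) (𝓝 0) := nhdsWithin_le_nhds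
    simpa [ha] using ((hid.const_mul (-4)).mul tendsto_dissectionFactor).mul
      (tendsto_dissectionFactor.comp (tendsto_pow_nhdsNE_zero four_ne_zero))
  have hale : ∀ᶠ n in atTop, ‖a (x n)‖ ≤ 1 :=
    (halim.comp hlim).norm.eventually_le_const (by simp)
  simpa [hx] using eq_zero_of_forall_eq_mul_succ (tendsto_thetaDefectG.comp hlim) hale hstep 0

/-! ### The bilateral series of `f₀` -/

/-- The series such that `f0 + 2 * psi0` is the sum of `q^{n²}/(-q;q)_n` over all integers `n`. -/
noncomputable def psi0 (q : ℂ) : ℂ :=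
  ∑' n : ℕ, (∏ j ∈ Finset.range n, (1 + q ^ (j + 1))) * q ^ ((n + 1) * (n + 2) / 2)

theorem tsum_nat_add_neg_add_one {f : ℤ → ℂ} (hf : Summable f) :
    ∑' n, f n = ∑' n : ℕ, f n + ∑' n : ℕ, f (-(n + 1 : ℤ)) :=
  tsum_of_nat_of_neg_add_one (hf.comp_injective Nat.cast_injective)
    (hf.comp_injective (i := fun n : ℕ => -(n + 1 : ℤ)) fun a b h => by simpa using h)

theorem natCast_triangle (n : ℕ) : (((n + 1) * (n + 2) / 2 : ℕ) : ℤ) = tri (n + 2) := by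
  rw [tri]
  push_cast
  congr 1
  ring

section Bilateral

variable {q : ℂ} (hq0 : q ≠ 0)
include hq0

theorem tsum_bilateral_two_mul (r : ℤ) :
    ∑' n : ℤ, q ^ (n ^ 2 + n * (2 * r) + tri (2 * r + 1)) = theta3 q * q ^ (r ^ 2 + r) := by
  have hexp : ∀ n, n ^ 2 + n * (2 * r) + tri (2 * r + 1) = (n + r) ^ 2 + (r ^ 2 + r) := fun n => by
    linarith [two_mul_tri (2 * r + 1)]
  simp_rw [hexp, zpow_add₀ hq0 _ (r ^ 2 + r), tsum_mul_right]
  rw [theta3, tsum_add_right (fun n => q ^ (n ^ 2)) r]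

theorem tsum_bilateral_two_mul_add_one (r : ℤ) :
    ∑' n : ℤ, q ^ (n ^ 2 + n * (2 * r + 1) + tri (2 * r + 1 + 1))
      = theta2 q * q ^ ((r + 1) ^ 2) := by
  have hexp : ∀ n, n ^ 2 + n * (2 * r + 1) + tri (2 * r + 1 + 1)
      = (n + r) ^ 2 + (n + r) + (r + 1) ^ 2 := fun n => by
    linarith [two_mul_tri (2 * r + 1 + 1)]
  simp_rw [hexp, zpow_add₀ hq0 _ ((r + 1) ^ 2), tsum_mul_right]
  rw [theta2, tsum_add_right (fun n => q ^ (n ^ 2 + n)) r]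

variable (hq : ‖q‖ < 1)
include hq

theorem summable_bilateral :
    Summable fun p : ℤ × ℤ => q ^ (p.1 ^ 2 + p.1 * p.2 + tri (p.2 + 1)) * invQP q p.2 := by
  obtain ⟨z, rfl⟩ := IsAlgClosed.exists_pow_nat_eq q two_pos
  have hz0 : z ≠ 0 := (pow_ne_zero_iff two_ne_zero).mp hq0
  have hz : ‖z‖ < 1 := by
    rw [norm_pow] at hq
    exact (pow_lt_one_iff_of_nonneg (norm_nonneg z) two_ne_zero).mp hq
  refine summable_mul_invQP hq (g := fun p : ℤ × ℤ => (z ^ 2) ^ (p.1 ^ 2 + p.1 * p.2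
    + tri (p.2 + 1))) ?_ Prod.snd
  -- In the variables `n` and `s = n + m` the form `2n² + 2nm + m² + m` becomes diagonal.
  refine (summable_sub_iff (F := fun n m => (z ^ 2) ^ (n ^ 2 + n * m + tri (m + 1)))).mp ?_
  refine (summable_mul_prod (summable_zpow_sq_add_mul hz0 hz (-1))
    (summable_zpow_sq_add_mul hz0 hz 1)).congr fun ⟨n, s⟩ => ?_
  rw [← zpow_add₀ hz0, ← zpow_natCast z 2, ← zpow_mul]
  congr 1
  push_cast
  linarith [two_mul_tri (s - n + 1)]

theorem zpow_sq_mul_qPInf_eq_tsum (n : ℤ) : q ^ (n ^ 2) * qPInf (-q ^ (n + 1)) q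
    = ∑' m : ℤ, q ^ (n ^ 2 + n * m + tri (m + 1)) * invQP q m := by
  rw [← tsum_zpow_mul_zpow_tri_mul_invQP (neg_ne_zero.mpr (zpow_ne_zero (n + 1) hq0)) hq0 hq,
    ← tsum_mul_left]
  refine tsum_congr fun m => ?_
  have hexp : n ^ 2 + n * m + tri (m + 1) = n ^ 2 + ((n + 1) * m + tri m) := by
    rw [tri_add_one]
    ring
  rw [neg_neg, hexp, zpow_add₀ hq0 (n ^ 2), zpow_add₀ hq0 ((n + 1) * m), zpow_mul]
  ring

theorem tsum_zpow_sq_mul_qPInf : ∑' n : ℤ, q ^ (n ^ 2) * qPInf (-q ^ (n + 1)) q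
    = theta3 q * (∑' r : ℤ, q ^ (r ^ 2 + r) * invQP q (2 * r))
      + theta2 q * ∑' r : ℤ, q ^ ((r + 1) ^ 2) * invQP q (2 * r + 1) := by
  have hS := summable_bilateral hq0 hq
  rw [tsum_congr (zpow_sq_mul_qPInf_eq_tsum hq0 hq), ← Summable.tsum_comm
    (f := fun n m => q ^ (n ^ 2 + n * m + tri (m + 1)) * invQP q m) hS]
  simp only [tsum_mul_right]
  rw [tsum_even_add_odd (f := fun m => (∑' n : ℤ, q ^ (n ^ 2 + n * m + tri (m + 1))) * invQP q m)
    (by simpa only [Function.comp_def, Prod.swap, tsum_mul_right] using hS.prod_symm.prod)]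
  simp only [tsum_bilateral_two_mul hq0, tsum_bilateral_two_mul_add_one hq0, mul_assoc,
    tsum_mul_left]

theorem zpow_tri_mul_qPInf_neg_zpow_neg (n : ℕ) :
    q ^ tri (n + 1) * qPInf (-q ^ (-(n : ℤ))) q
      = 2 * (∏ i ∈ Finset.range n, (1 + q ^ (i + 1))) * qPInf (-q) q := by
  induction n with
  | zero =>
    rw [qPInf_eq_one_sub_mul _ hq]
    simp [tri]
    norm_num
  | succ n ih =>
    have hmul : -q ^ (-(n + 1 : ℤ)) * q = -q ^ (-(n : ℤ)) := by
      rw [neg_mul, ← zpow_add_one₀ hq0]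
      congr 2
      ring
    have hcancel : q ^ (n + 1) * (1 - -q ^ (-(n + 1 : ℤ))) = 1 + q ^ (n + 1) := by
      rw [sub_neg_eq_add, mul_add, mul_one, zpow_neg, ← Nat.cast_add_one, zpow_natCast,
        mul_inv_cancel₀ (pow_ne_zero _ hq0), add_comm]
    rw [Finset.prod_range_succ, Nat.cast_add_one, qPInf_eq_one_sub_mul _ hq, hmul,
      tri_add_one (n + 1), zpow_add₀ hq0, ← Nat.cast_add_one, zpow_natCast, Nat.cast_add_one]
    linear_combination (1 + q ^ (n + 1)) * ih
      + q ^ tri (n + 1) * qPInf (-q ^ (-(n : ℤ))) q * hcancel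

omit hq0 in
theorem zpow_natCast_sq_mul_qPInf (n : ℕ) :
    q ^ ((n : ℤ) ^ 2) * qPInf (-q ^ ((n : ℤ) + 1)) q
      = qPInf (-q) q * (q ^ (n ^ 2) / qP (-q) q n) := by
  have hqP := qP_ne_zero hq (by rwa [norm_neg] : ‖-q‖ < 1) n
  rw [qPInf_eq_qP_mul (-q) hq n, neg_mul, ← pow_succ', mul_right_comm, mul_div_cancel₀ _ hqP]
  norm_cast

theorem zpow_neg_sq_mul_qPInf (n : ℕ) :
    q ^ ((-(n + 1 : ℤ)) ^ 2) * qPInf (-q ^ (-(n + 1 : ℤ) + 1)) q = 2 * qPInf (-q) q *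
      ((∏ j ∈ Finset.range n, (1 + q ^ (j + 1))) * q ^ ((n + 1) * (n + 2) / 2)) := by
  have hexp : (-(n + 1 : ℤ)) ^ 2 = ((n + 1) * (n + 2) / 2 : ℕ) + tri (n + 1) := by
    rw [natCast_triangle]
    linarith [two_mul_tri (n + 1), two_mul_tri (n + 2)]
  rw [hexp, zpow_add₀ hq0, zpow_natCast, neg_add, neg_add_cancel_right]
  linear_combination q ^ ((n + 1) * (n + 2) / 2) * zpow_tri_mul_qPInf_neg_zpow_neg hq0 hq n

theorem qPInf_mul_f0_add_two_mul_psi0 : qPInf (-q) q * (f0 q + 2 * psi0 q)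
    = ∑' n : ℤ, q ^ (n ^ 2) * qPInf (-q ^ (n + 1)) q := by
  have hS : Summable fun n : ℤ => q ^ (n ^ 2) * qPInf (-q ^ (n + 1)) q := by
    simp_rw [zpow_sq_mul_qPInf_eq_tsum hq0 hq]
    exact (summable_bilateral hq0 hq).prod
  rw [tsum_nat_add_neg_add_one hS,
    tsum_congr (zpow_natCast_sq_mul_qPInf hq), tsum_congr (zpow_neg_sq_mul_qPInf hq0 hq),
    tsum_mul_left, tsum_mul_left, f0, psi0]
  ring

theorem f0_add_two_mul_psi0_eq_theta3_mul_add :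
    f0 q + 2 * psi0 q = theta3 q * rrG (-q) + q * theta2 q * rrH (q ^ 4) := by
  have hbil := qPInf_mul_f0_add_two_mul_psi0 hq0 hq
  rw [tsum_zpow_sq_mul_qPInf hq0 hq] at hbil
  linear_combination qPInf q (q ^ 2) * hbil
    - (f0 q + 2 * psi0 q) * qPInf_self_sq_mul_qPInf_neg hq
    + theta3 q * qPInf_mul_tsum_sq_add_invQP_two_mul hq0 hq
    + theta2 q * qPInf_mul_tsum_add_one_sq_invQP_two_mul_add_one hq0 hq

theorem theta3_neg_mul_rrG : theta3 (-q) * rrG q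
    = qPInf (q ^ 2) (q ^ 5) * qPInf (q ^ 3) (q ^ 5) * qPInf (q ^ 5) (q ^ 5) / qPInf (-q) q := by
  have hO := qPInf_self_sq_mul_qPInf_neg hq
  rw [← qPInf_mul_rrG hq0 hq, eq_div_iff (right_ne_zero_of_mul_eq_one hO), theta3_neg hq0 hq,
    ← qPInf_self_sq_mul hq]
  linear_combination qPInf q (q ^ 2) * qPInf (q ^ 2) (q ^ 2) * rrG q * hO

theorem theta2_mul_rrH : theta2 q * rrH (q ^ 4) = 2 * (qPInf (q ^ 4) (q ^ 20)
    * qPInf (q ^ 16) (q ^ 20) * qPInf (q ^ 20) (q ^ 20)) / qPInf (q ^ 2) (q ^ 4) := by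
  have h2 := norm_pow_lt_one hq two_ne_zero
  have hO := qPInf_self_sq_mul_qPInf_neg h2
  have hN := qPInf_mul_qPInf_neg (q ^ 2) h2
  have hH := qPInf_mul_rrH (pow_ne_zero 4 hq0) (norm_pow_lt_one hq four_ne_zero)
  simp only [← pow_mul, Nat.reduceMul] at hO hN hH
  rw [← hH, ← hN, eq_div_iff (left_ne_zero_of_mul_eq_one hO), theta2_eq hq0 hq]
  linear_combination 2 * qPInf (q ^ 2) (q ^ 2) * qPInf (-q ^ 2) (q ^ 2) * rrH (q ^ 4) * hO

theorem f0_add_two_mul_psi0 : f0 q + 2 * psi0 q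
    = 4 * q * (qPInf (q ^ 4) (q ^ 20) * qPInf (q ^ 16) (q ^ 20) * qPInf (q ^ 20) (q ^ 20))
        / qPInf (q ^ 2) (q ^ 4)
      + (qPInf (q ^ 2) (q ^ 5) * qPInf (q ^ 3) (q ^ 5) * qPInf (q ^ 5) (q ^ 5))
        / qPInf (-q) q := by
  have hdefect := thetaDefectG_eq_zero hq0 hq
  rw [thetaDefectG] at hdefect
  linear_combination f0_add_two_mul_psi0_eq_theta3_mul_add hq0 hq + hdefect
    + theta3_neg_mul_rrG hq0 hq + 2 * q * theta2_mul_rrH hq0 hq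

end Bilateral

/-! ### The radial limit of `psi0` -/

theorem prod_range_mul_le_pow {g : ℕ → ℝ} {N : ℕ} {c : ℝ} (hg : ∀ j, 0 ≤ g j)
    (hc : ∀ m, ∏ s ∈ Finset.range N, g (N * m + s) ≤ c) (m : ℕ) :
    ∏ j ∈ Finset.range (N * m), g j ≤ c ^ m := by
  induction m with
  | zero => simp
  | succ m ih =>
    rw [mul_add_one, Finset.prod_range_add, pow_succ]
    exact mul_le_mul ih (hc m) (Finset.prod_nonneg fun _ _ => hg _)
      ((Finset.prod_nonneg fun _ _ => hg _).trans ih)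

theorem prod_range_le_geometric {g : ℕ → ℝ} {N : ℕ} (hN : 0 < N) {C ρ : ℝ} (hρ : 0 < ρ)
    (hρC : ρ ≤ C) (hg : ∀ j, 0 ≤ g j) (hgC : ∀ j, g j ≤ C)
    (hblock : ∀ m, ∏ s ∈ Finset.range N, g (N * m + s) ≤ ρ ^ N) (n : ℕ) :
    ∏ j ∈ Finset.range n, g j ≤ (C / ρ) ^ N * ρ ^ n := by
  have hrest : ∏ s ∈ Finset.range (n % N), g (N * (n / N) + s) ≤ C ^ (n % N) := by
    simpa using Finset.prod_le_prod (s := Finset.range (n % N))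
      (fun s _ => hg (N * (n / N) + s)) fun s _ => hgC (N * (n / N) + s)
  have hone : 1 ≤ C / ρ := (one_le_div hρ).mpr hρC
  calc ∏ j ∈ Finset.range n, g j
      = (∏ j ∈ Finset.range (N * (n / N)), g j)
          * ∏ s ∈ Finset.range (n % N), g (N * (n / N) + s) := by
        rw [← Finset.prod_range_add, Nat.div_add_mod]
    _ ≤ (ρ ^ N) ^ (n / N) * C ^ (n % N) :=
        mul_le_mul (prod_range_mul_le_pow hg hblock _) hrest (Finset.prod_nonneg fun _ _ => hg _)
          (by positivity)
    _ = (C / ρ) ^ (n % N) * ρ ^ n := by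
        conv_rhs => rw [← Nat.div_add_mod n N, pow_add, Nat.div_add_mod n N, pow_mul]
        rw [div_pow]
        field_simp
    _ ≤ (C / ρ) ^ N * ρ ^ n := by
        gcongr
        exact (Nat.mod_lt n hN).le

section RootOfUnity

variable {N : ℕ} {ζ : ℂ}

theorem prod_one_add_mul_pow (hN : 0 < N) (hev : Even N) (hζ : IsPrimitiveRoot ζ N) (x : ℂ) :
    ∏ s ∈ Finset.range N, (1 + x * ζ ^ (s + 1)) = 1 - x ^ N := by
  have h := congrArg (Polynomial.eval 1)
    (X_pow_sub_C_eq_prod hζ hN (α := -(x * ζ)) (a := x ^ N)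
      (by rw [hev.neg_pow, mul_pow, hζ.pow_eq_one, mul_one]))
  simp only [Polynomial.eval_sub, Polynomial.eval_pow, Polynomial.eval_X, Polynomial.eval_C,
    one_pow, Polynomial.eval_prod] at h
  rw [h]
  exact Finset.prod_congr rfl fun s _ => by ring

theorem prod_norm_mul_norm_one_add_le (hN : 0 < N) (hev : Even N) (hζ : IsPrimitiveRoot ζ N)
    {x : ℝ} (hx : x ∈ Icc (0 : ℝ) 1) :
    ∏ s ∈ Finset.range N, ‖(x : ℂ) * ζ ^ (s + 1)‖ * ‖1 + (x : ℂ) * ζ ^ (s + 1)‖ ≤ 1 / 4 := by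
  have hsub : (1 : ℂ) - (x : ℂ) ^ N = ((1 - x ^ N : ℝ) : ℂ) := by push_cast; rfl
  have hle : x ^ N ≤ 1 := pow_le_one₀ hx.1 hx.2
  rw [Finset.prod_mul_distrib, ← norm_prod (f := fun s => 1 + (x : ℂ) * ζ ^ (s + 1)),
    prod_one_add_mul_pow hN hev hζ, hsub, Complex.norm_of_nonneg (sub_nonneg.mpr hle)]
  simp only [norm_mul, norm_pow, hζ.norm'_eq_one hN.ne', one_pow, mul_one, Finset.prod_const,
    Finset.card_range, Complex.norm_of_nonneg hx.1]
  linarith [sq_nonneg (2 * x ^ N - 1)]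

theorem eventually_prod_norm_mul_norm_one_add_le (hN : 0 < N) (hev : Even N)
    (hζ : IsPrimitiveRoot ζ N) :
    ∀ᶠ t : ℝ in 𝓝 1, ∀ x ∈ Icc (0 : ℝ) 1, ∏ s ∈ Finset.range N,
      ‖(x : ℂ) * (t * ζ) ^ (s + 1)‖ * ‖1 + (x : ℂ) * (t * ζ) ^ (s + 1)‖ ≤ 1 / 2 := by
  refine isCompact_Icc.eventually_forall_of_forall_eventually fun x hx => ?_
  have hcont : Continuous fun z : ℝ × ℝ => ∏ s ∈ Finset.range N,
      ‖(z.2 : ℂ) * (z.1 * ζ) ^ (s + 1)‖ * ‖1 + (z.2 : ℂ) * (z.1 * ζ) ^ (s + 1)‖ := by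
    fun_prop
  refine (hcont.continuousAt (x := (1, x))).eventually_le_const ?_
  simp only [Complex.ofReal_one, one_mul]
  exact (prod_norm_mul_norm_one_add_le hN hev hζ hx).trans_lt (by norm_num)

theorem eventually_forall_prod_block_le (hN : 0 < N) (hev : Even N) (hζ : IsPrimitiveRoot ζ N) :
    ∀ᶠ t : ℝ in 𝓝[Ioo 0 1] 1, ∀ m, ∏ s ∈ Finset.range N,
      ‖((t : ℂ) * ζ) ^ (N * m + s + 1)‖ * ‖1 + ((t : ℂ) * ζ) ^ (N * m + s + 1)‖ ≤ 1 / 2 := by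
  filter_upwards [nhdsWithin_le_nhds (eventually_prod_norm_mul_norm_one_add_le hN hev hζ),
    self_mem_nhdsWithin] with t hblock ht m
  have hpow : ∀ s, ((t : ℂ) * ζ) ^ (N * m + s + 1)
      = ((t ^ (N * m) : ℝ) : ℂ) * (t * ζ) ^ (s + 1) := fun s => by
    rw [add_assoc, pow_add, mul_pow (t : ℂ) ζ (N * m), pow_mul ζ, hζ.pow_eq_one, one_pow, mul_one,
      Complex.ofReal_pow]
  simpa only [hpow] using
    hblock (t ^ (N * m)) ⟨pow_nonneg ht.1.le _, pow_le_one₀ ht.1.le ht.2.le⟩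

end RootOfUnity

theorem pow_triangle_eq_prod (q : ℂ) (n : ℕ) :
    q ^ ((n + 1) * (n + 2) / 2) = q ^ (n + 1) * ∏ j ∈ Finset.range n, q ^ (j + 1) := by
  have hsum := Finset.sum_range_id (n + 2)
  rw [Finset.sum_range_succ', add_zero] at hsum
  rw [mul_comm (q ^ (n + 1)), ← Finset.prod_range_succ (fun j => q ^ (j + 1)),
    Finset.prod_pow_eq_pow_sum, hsum, mul_comm (n + 1)]
  rfl

theorem norm_psi0_term_le {q : ℂ} (hq : ‖q‖ ≤ 1) (n : ℕ) :
    ‖(∏ j ∈ Finset.range n, (1 + q ^ (j + 1))) * q ^ ((n + 1) * (n + 2) / 2)‖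
      ≤ ∏ j ∈ Finset.range n, ‖q ^ (j + 1)‖ * ‖1 + q ^ (j + 1)‖ := by
  rw [pow_triangle_eq_prod, norm_mul, norm_mul, norm_prod, norm_prod, Finset.prod_mul_distrib,
    mul_comm, mul_assoc]
  refine mul_le_of_le_one_left (by positivity) ?_
  rw [norm_pow]
  exact pow_le_one₀ (norm_nonneg _) hq

theorem norm_psi0_term_le_geometric {q : ℂ} (hq : ‖q‖ ≤ 1) {N : ℕ} (hN : 0 < N) {ρ : ℝ}
    (hρ0 : 0 < ρ) (hρ2 : ρ ≤ 2)
    (hblock : ∀ m, ∏ s ∈ Finset.range N, ‖q ^ (N * m + s + 1)‖ * ‖1 + q ^ (N * m + s + 1)‖ ≤ ρ ^ N)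
    (n : ℕ) :
    ‖(∏ j ∈ Finset.range n, (1 + q ^ (j + 1))) * q ^ ((n + 1) * (n + 2) / 2)‖
      ≤ (2 / ρ) ^ N * ρ ^ n := by
  have hpow : ∀ j, ‖q ^ (j + 1)‖ ≤ 1 := fun j => by
    rw [norm_pow]
    exact pow_le_one₀ (norm_nonneg q) hq
  have hfactor : ∀ j, ‖q ^ (j + 1)‖ * ‖1 + q ^ (j + 1)‖ ≤ 2 := fun j =>
    calc ‖q ^ (j + 1)‖ * ‖1 + q ^ (j + 1)‖
        ≤ ‖1 + q ^ (j + 1)‖ := mul_le_of_le_one_left (norm_nonneg _) (hpow j)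
      _ ≤ ‖(1 : ℂ)‖ + ‖q ^ (j + 1)‖ := norm_add_le _ _
      _ ≤ 2 := by linarith [norm_one (α := ℂ), hpow j]
  exact (norm_psi0_term_le hq n).trans
    (prod_range_le_geometric hN hρ0 hρ2 (fun j => by positivity) hfactor hblock n)

theorem psi0_eq_sum_range {k : ℕ} (hk : 0 < k) {ζ : ℂ} (hζ : ζ ^ k = -1) :
    psi0 ζ = ∑ n ∈ Finset.range k,
      (∏ j ∈ Finset.range n, (1 + ζ ^ (j + 1))) * ζ ^ ((n + 1) * (n + 2) / 2) := by
  refine tsum_eq_sum fun n hn => ?_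
  rw [Finset.mem_range, not_lt] at hn
  rw [Finset.prod_eq_zero (Finset.mem_range.mpr (show k - 1 < n by lia)), zero_mul]
  rw [Nat.sub_add_cancel hk, hζ, add_neg_cancel]

theorem tendsto_psi0 {N : ℕ} (hN : 0 < N) (hev : Even N) {ζ : ℂ} (hζ : IsPrimitiveRoot ζ N) :
    Tendsto (fun t : ℝ => psi0 (t * ζ)) (𝓝[Ioo 0 1] 1) (𝓝 (psi0 ζ)) := by
  set ρ : ℝ := (1 / 2) ^ ((N : ℝ)⁻¹)
  have hρN : ρ ^ N = 1 / 2 := Real.rpow_inv_natCast_pow (by norm_num) hN.ne'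
  have hρ0 : 0 < ρ := by positivity
  have hρ1 : ρ < 1 := Real.rpow_lt_one (by norm_num) (by norm_num) (by positivity)
  refine tendsto_tsum_of_dominated_convergence (bound := fun n => (2 / ρ) ^ N * ρ ^ n)
    ((summable_geometric_of_lt_one hρ0.le hρ1).mul_left _) (fun n => ?_) ?_
  · have hcont : Continuous fun t : ℝ => (∏ j ∈ Finset.range n, (1 + ((t : ℂ) * ζ) ^ (j + 1)))
        * ((t : ℂ) * ζ) ^ ((n + 1) * (n + 2) / 2) := by fun_prop
    simpa using (hcont.tendsto 1).mono_left nhdsWithin_le_nhds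
  · filter_upwards [eventually_forall_prod_block_le hN hev hζ, self_mem_nhdsWithin]
      with t hblock ht
    have hq : ‖(t : ℂ) * ζ‖ ≤ 1 := by
      rw [norm_mul, hζ.norm'_eq_one hN.ne', mul_one, Complex.norm_of_nonneg ht.1.le]
      exact ht.2.le
    exact norm_psi0_term_le_geometric hq hN hρ0 (by linarith) (by simpa only [hρN] using hblock)

end MockTheta

theorem stmt10 (k : ℕ) (hk : 0 < k) (ζ : ℂ) (hζ : IsPrimitiveRoot ζ (2 * k)) :
    Tendsto (fun t : ℝ =>
        f0 ((t : ℂ) * ζ) -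
          (4 * ((t : ℂ) * ζ) *
              (qPInf (((t : ℂ) * ζ) ^ 4) (((t : ℂ) * ζ) ^ 20) *
                qPInf (((t : ℂ) * ζ) ^ 16) (((t : ℂ) * ζ) ^ 20) *
                qPInf (((t : ℂ) * ζ) ^ 20) (((t : ℂ) * ζ) ^ 20)) /
              qPInf (((t : ℂ) * ζ) ^ 2) (((t : ℂ) * ζ) ^ 4)
            + (qPInf (((t : ℂ) * ζ) ^ 2) (((t : ℂ) * ζ) ^ 5) *
                qPInf (((t : ℂ) * ζ) ^ 3) (((t : ℂ) * ζ) ^ 5) *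
                qPInf (((t : ℂ) * ζ) ^ 5) (((t : ℂ) * ζ) ^ 5)) /
              qPInf (-((t : ℂ) * ζ)) ((t : ℂ) * ζ)))
      (nhdsWithin 1 (Set.Ioo (0 : ℝ) 1))
      (nhds (-2 * ∑ n ∈ Finset.range k,
          (∏ j ∈ Finset.range n, (1 + ζ ^ (j + 1))) * ζ ^ ((n + 1) * (n + 2) / 2))) := by
  have hζk : ζ ^ k = -1 :=
    (hζ.pow (by lia) (mul_comm 2 k)).eq_neg_one_of_two_right
  have hnorm : ‖ζ‖ = 1 := hζ.norm'_eq_one (by lia)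
  have hlim := MockTheta.tendsto_psi0 (by lia) (even_two_mul k) hζ
  rw [MockTheta.psi0_eq_sum_range hk hζk] at hlim
  refine (hlim.const_mul (-2)).congr' ?_
  filter_upwards [self_mem_nhdsWithin] with t ht
  have hq0 : (t : ℂ) * ζ ≠ 0 :=
    mul_ne_zero (Complex.ofReal_ne_zero.mpr ht.1.ne') (hζ.ne_zero (by lia))
  have hq : ‖(t : ℂ) * ζ‖ < 1 := by
    rw [norm_mul, hnorm, mul_one, Complex.norm_of_nonneg ht.1.le]
    exact ht.2
  rw [← MockTheta.f0_add_two_mul_psi0 hq0 hq]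
  ring
end
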